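/- arXiv:2212.03765 — 7 statements merged into one kernel-verified Lean document; each statement's English description precedes it below -/
import Mathlib

section
/- Let g : ℝⁿ → ℝⁿ and let x* ∈ ℝⁿ satisfy g(x*) = 0. Let x : [0,∞) → ℝⁿ be differentiable with ẋ(t) = g(x(t)) for all t ≥ 0. Suppose V : ℝⁿ → ℝ is continuously differentiable with V(x*) = 0 and V(y) > 0 for all y ≠ x*, and suppose there exist constants a, b > 0, γ₁ ∈ (0,1) and γ₂ > 1 such that ⟨∇V(x(t)), g(x(t))⟩ ≤ −a·V(x(t))^{γ₁} − b·V(x(t))^{γ₂} for all t ≥ 0. Then x(t) = x* for all t ≥ T̄, where T̄ = 1/(a(1−γ₁)) + 1/(b(γ₂−1)). -/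
theorem mvt_le_aux (f f' : ℝ → ℝ) (C s t : ℝ) (hst : s ≤ t)
    (hf : ∀ u ∈ Set.Icc s t, HasDerivAt f (f' u) u) (hC : ∀ u ∈ Set.Icc s t, f' u ≤ C) :
    f t - f s ≤ C * (t - s) := by
  rcases hst.eq_or_lt with rfl | hlt
  · simp
  obtain ⟨c, hc, hc'⟩ := exists_hasDerivAt_eq_slope f f' hlt
    (fun u hu => (hf u hu).continuousAt.continuousWithinAt)
    (fun u hu => hf u (Set.Ioo_subset_Icc_self hu))
  have h := hC c (Set.Ioo_subset_Icc_self hc)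
  rw [hc', div_le_iff₀ (by linarith)] at h
  exact h

/-- **Fixed-time stability sufficient condition** (Lemma 1, per-trajectory version).
If a positive-definite C¹ Lyapunov function `V` decreases along the trajectory of
`ẋ = g(x)` at rate at least `a V^γ₁ + b V^γ₂` with `γ₁ ∈ (0,1)`, `γ₂ > 1`, then the
trajectory reaches the equilibrium `x*` by time `T̄ = 1/(a(1-γ₁)) + 1/(b(γ₂-1))`. -/
theorem fixed_time_stability
    {n : ℕ} (g : (Fin n → ℝ) → (Fin n → ℝ)) (xstar : Fin n → ℝ)
    (hg : g xstar = 0)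
    (x : ℝ → (Fin n → ℝ))
    (hx : ∀ t : ℝ, 0 ≤ t → HasDerivAt x (g (x t)) t)
    (V : (Fin n → ℝ) → ℝ) (hV : ContDiff ℝ 1 V)
    (hV0 : V xstar = 0) (hVpos : ∀ y, y ≠ xstar → 0 < V y)
    (a b γ₁ γ₂ : ℝ) (ha : 0 < a) (hb : 0 < b)
    (hγ₁ : γ₁ ∈ Set.Ioo (0 : ℝ) 1) (hγ₂ : 1 < γ₂)
    (hdec : ∀ t : ℝ, 0 ≤ t →
      fderiv ℝ V (x t) (g (x t)) ≤ -a * V (x t) ^ γ₁ - b * V (x t) ^ γ₂) :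
    ∀ t : ℝ, 1 / (a * (1 - γ₁)) + 1 / (b * (γ₂ - 1)) ≤ t → x t = xstar := by
  intro t ht
  by_contra hne
  obtain ⟨h0, h1⟩ := hγ₁
  have hT1 : 0 < 1 / (b * (γ₂ - 1)) := one_div_pos.2 (mul_pos hb (by linarith))
  have hT2 : 0 < 1 / (a * (1 - γ₁)) := one_div_pos.2 (mul_pos ha (by linarith))
  have e1 : b * (γ₂ - 1) * (1 / (b * (γ₂ - 1))) = 1 :=
    mul_one_div_cancel (mul_pos hb (by linarith)).ne'
  have e2 : a * (1 - γ₁) * (1 / (a * (1 - γ₁))) = 1 :=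
    mul_one_div_cancel (mul_pos ha (by linarith)).ne'
  generalize 1 / (b * (γ₂ - 1)) = T1 at *
  generalize 1 / (a * (1 - γ₁)) = T2 at *
  have hnn : ∀ y, 0 ≤ V y := fun y => by
    by_cases h : y = xstar
    · rw [h, hV0]
    · exact (hVpos y h).le
  have hw : ∀ u, 0 ≤ u → HasDerivAt (fun u => V (x u)) (fderiv ℝ V (x u) (g (x u))) u :=
    fun u hu => ((hV.differentiable (by norm_num)) (x u)).hasFDerivAt.comp_hasDerivAt u (hx u hu)
  generalize hdd : (fun u => fderiv ℝ V (x u) (g (x u))) = d at *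
  have hdv : ∀ u, fderiv ℝ V (x u) (g (x u)) = d u := fun u => by rw [← hdd]
  simp only [hdv] at hw hdec
  have hpt : 0 < V (x t) := hVpos _ hne
  have hnw : ∀ u, 0 ≤ V (x u) := fun u => hnn _
  generalize hww : (fun u => V (x u)) = w at *
  have hwv : ∀ u, V (x u) = w u := fun u => by rw [← hww]
  simp only [hwv] at hdec hpt hnw
  have hpos : ∀ u ∈ Set.Icc 0 t, 0 < w u := by
    intro u hu
    have := mvt_le_aux w d 0 u t hu.2 (fun v hv => hw v (hu.1.trans hv.1)) (fun v hv => by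
      have h := hdec v (hu.1.trans hv.1)
      have := mul_nonneg ha.le (Real.rpow_nonneg (hnw v) γ₁)
      have := mul_nonneg hb.le (Real.rpow_nonneg (hnw v) γ₂)
      linarith)
    linarith
  have hder : ∀ p : ℝ, ∀ u ∈ Set.Icc 0 t,
      HasDerivAt (fun u => w u ^ p) (d u * p * w u ^ (p - 1)) u :=
    fun p u hu => (hw u hu.1).rpow_const (Or.inl (hpos u hu).ne')
  have key : ∀ u ∈ Set.Icc 0 t, d u * w u ^ (-γ₁) ≤ -a ∧ d u * w u ^ (-γ₂) ≤ -b := by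
    intro u hu
    have hp := hpos u hu
    have hd := hdec u hu.1
    have q1 := Real.rpow_pos_of_pos hp γ₁
    have q2 := Real.rpow_pos_of_pos hp γ₂
    have r1 := mul_pos ha q1
    have r2 := mul_pos hb q2
    constructor
    · rw [Real.rpow_neg hp.le, ← div_eq_mul_inv, div_le_iff₀ q1]; linarith
    · rw [Real.rpow_neg hp.le, ← div_eq_mul_inv, div_le_iff₀ q2]; linarith
  have hT1m : T1 ∈ Set.Icc 0 t := ⟨hT1.le, by linarith⟩
  have A := mvt_le_aux (fun u => -(w u ^ (1 - γ₂)))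
    (fun u => -(d u * (1 - γ₂) * w u ^ (1 - γ₂ - 1))) (-(b * (γ₂ - 1))) 0 T1 hT1.le
    (fun u hu => (hder _ u ⟨hu.1, hu.2.trans hT1m.2⟩).neg)
    (fun u hu => by
      have := (key u ⟨hu.1, hu.2.trans hT1m.2⟩).2
      have e : 1 - γ₂ - 1 = -γ₂ := by ring
      rw [e]
      nlinarith)
  have B := mvt_le_aux (fun u => w u ^ (1 - γ₁))
    (fun u => d u * (1 - γ₁) * w u ^ (1 - γ₁ - 1)) (-(a * (1 - γ₁))) T1 t hT1m.2
    (fun u hu => hder _ u ⟨hT1.le.trans hu.1, hu.2⟩)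
    (fun u hu => by
      have := (key u ⟨hT1.le.trans hu.1, hu.2⟩).1
      have e : 1 - γ₁ - 1 = -γ₁ := by ring
      rw [e]
      nlinarith)
  have p0 := Real.rpow_pos_of_pos (hpos 0 ⟨le_rfl, hT1.le.trans hT1m.2⟩) (1 - γ₂)
  have pt := Real.rpow_pos_of_pos hpt (1 - γ₁)
  have hlt : w T1 < 1 := by
    by_contra hge
    have := Real.rpow_le_one_of_one_le_of_nonpos (not_lt.1 hge) (show 1 - γ₂ ≤ 0 by linarith)
    simp only [sub_zero] at A
    linarith
  have := Real.rpow_le_one (hnw T1) hlt.le (show 0 ≤ 1 - γ₁ by linarith)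
  have hm : a * (1 - γ₁) * T2 ≤ a * (1 - γ₁) * (t - T1) :=
    mul_le_mul_of_nonneg_left (by linarith) (mul_pos ha (by linarith)).le
  linarith
end

section
/- Let f : ℝⁿ → ℝ be continuously differentiable, satisfy the PL inequality with modulus μ > 0, and possess a unique minimizer x* with f(x*) = f* = min f. Fix p > 2 and q ∈ (1,2), and let x : [0,∞) → ℝⁿ be a differentiable solution of the GenFlow dynamics ẋᵢ(t) = −sign(∇ᵢf(x(t)))·( |∇ᵢf(x(t))|^{1/(p−1)} + |∇ᵢf(x(t))|^{1/(q−1)} ) for i = 1,…,n. Then x(t) = x* for all t ≥ T̄, where T̄ = 1/(a(1−γ₁)) + 1/(b(γ₂−1)) with γ₁ = p/(2(p−1)), γ₂ = q/(2(q−1)), a = (2μ)^{p/(2(p−1))} and b = n^{(q−2)/(2(q−1))}·(2μ)^{q/(2(q−1))}. -/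
/-- The gradient of `f : ℝⁿ → ℝ`, as the vector of partial derivatives. -/
noncomputable def grad {n : ℕ} (f : (Fin n → ℝ) → ℝ) (x : Fin n → ℝ) : Fin n → ℝ :=
  fun i => fderiv ℝ f x (Pi.single i 1)

lemma gf_mvt (U U' : ℝ → ℝ) (u v C : ℝ) (huv : u ≤ v)
    (hU : ∀ s ∈ Set.Icc u v, HasDerivAt U (U' s) s) (hC : ∀ s ∈ Set.Icc u v, C ≤ U' s) :
    C * (v - u) ≤ U v - U u := by
  refine (convex_Icc u v).mul_sub_le_image_sub_of_le_deriv
    (fun s hs => (hU s hs).continuousAt.continuousWithinAt)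
    (fun s hs => (hU s (interior_subset hs)).differentiableAt.differentiableWithinAt)
    (fun s hs => ?_) u (Set.left_mem_Icc.2 huv) v (Set.right_mem_Icc.2 huv) huv
  rw [(hU s (interior_subset hs)).deriv]
  exact hC s (interior_subset hs)

lemma gf_lyap (V V' : ℝ → ℝ) (a b c d : ℝ) (ha : 0 < a) (hb : 0 < b) (hc : c < 1) (hd : 1 < d)
    (hV : ∀ s, 0 ≤ s → HasDerivAt V (V' s) s) (h0 : ∀ s, 0 ≤ V s)
    (hle : ∀ s, 0 ≤ s → V' s ≤ -(a * V s ^ c + b * V s ^ d))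
    (t : ℝ) (ht : 1 / (a * (1 - c)) + 1 / (b * (d - 1)) ≤ t) : V t = 0 := by
  have hc' : 0 < 1 - c := by linarith
  have hd' : 0 < d - 1 := by linarith
  by_contra hne
  have hpos : 0 < V t := lt_of_le_of_ne (h0 t) (Ne.symm hne)
  set T1 := 1 / (a * (1 - c)) with hT1
  set T2 := 1 / (b * (d - 1)) with hT2
  have hT1p : 0 < T1 := by positivity
  have hT2p : 0 < T2 := by positivity
  have hVpos : ∀ s, 0 ≤ s → s ≤ t → 0 < V s := by
    intro s hs hst
    have := gf_mvt (fun r => - V r) (fun r => - V' r) s t 0 hst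
      (fun r hr => (hV r (hs.trans hr.1)).neg) (fun r hr => by
        have h1 := hle r (hs.trans hr.1)
        have h2 : 0 ≤ a * V r ^ c + b * V r ^ d := by
          have := Real.rpow_nonneg (h0 r) c
          have := Real.rpow_nonneg (h0 r) d
          positivity
        show 0 ≤ -V' r
        linarith)
    try simp only at this
    linarith
  have hA : V T2 < 1 := by
    have h := gf_mvt (fun r => V r ^ (1 - d)) (fun r => V' r * (1 - d) * V r ^ (1 - d - 1)) 0 T2
      (b * (d - 1)) hT2p.le
      (fun r hr => (hV r hr.1).rpow_const (Or.inl (hVpos r hr.1 (by linarith [hr.2])).ne'))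
      (fun r hr => by
        have hp := hVpos r hr.1 (by linarith [hr.2])
        have h1 := hle r hr.1
        have h3 : V r ^ (1 - d - 1) * V r ^ d = 1 := by
          rw [← Real.rpow_add hp]; simp
        have h4 : 0 < V r ^ (1 - d - 1) := Real.rpow_pos_of_pos hp _
        have h5 : 0 < V r ^ c := Real.rpow_pos_of_pos hp _
        have h6 : b * V r ^ d ≤ - V' r := by nlinarith
        calc b * (d - 1) = (d - 1) * V r ^ (1 - d - 1) * (b * V r ^ d) := by
              linear_combination (-(b * (d - 1))) * h3
          _ ≤ (d - 1) * V r ^ (1 - d - 1) * (- V' r) :=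
              mul_le_mul_of_nonneg_left h6 (by positivity)
          _ = _ := by ring)
    have h7 : b * (d - 1) * (T2 - 0) = 1 := by rw [hT2]; field_simp; simp
    rw [h7] at h
    have h8 : 0 < V 0 ^ (1 - d) := Real.rpow_pos_of_pos (hVpos 0 le_rfl (by linarith)) _
    by_contra hcon
    have h9 := Real.rpow_le_one_of_one_le_of_nonpos (not_lt.1 hcon) (show 1 - d ≤ 0 by linarith)
    try simp only at h
    linarith
  have h := gf_mvt (fun r => - V r ^ (1 - c)) (fun r => -(V' r * (1 - c) * V r ^ (1 - c - 1))) T2 t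
      (a * (1 - c)) (by linarith)
      (fun r hr => ((hV r (by linarith [hr.1])).rpow_const
        (Or.inl (hVpos r (by linarith [hr.1]) hr.2).ne')).neg)
      (fun r hr => by
        have hp := hVpos r (by linarith [hr.1]) hr.2
        have h1 := hle r (by linarith [hr.1])
        have h3 : V r ^ (1 - c - 1) * V r ^ c = 1 := by
          rw [← Real.rpow_add hp]; simp
        have h4 : 0 < V r ^ (1 - c - 1) := Real.rpow_pos_of_pos hp _
        have h5 : 0 < V r ^ d := Real.rpow_pos_of_pos hp _
        have h6 : a * V r ^ c ≤ - V' r := by nlinarith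
        calc a * (1 - c) = (1 - c) * V r ^ (1 - c - 1) * (a * V r ^ c) := by
              linear_combination (-(a * (1 - c))) * h3
          _ ≤ (1 - c) * V r ^ (1 - c - 1) * (- V' r) :=
              mul_le_mul_of_nonneg_left h6 (by positivity)
          _ = _ := by ring)
  have h7 : a * (1 - c) * T1 = 1 := by rw [hT1]; field_simp
  have h8 : a * (1 - c) * T1 ≤ a * (1 - c) * (t - T2) :=
    mul_le_mul_of_nonneg_left (by linarith) (by positivity)
  have h9 : 0 < V t ^ (1 - c) := Real.rpow_pos_of_pos hpos _
  have h10 : V T2 ^ (1 - c) < 1 := Real.rpow_lt_one (h0 _) hA hc'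
  try simp only at h
  linarith

lemma gf_sum_low {ι : Type*} (s : Finset ι) (w : ι → ℝ) (hw : ∀ i, 0 ≤ w i) (c : ℝ) (hc : 0 < c)
    (hc1 : c ≤ 1) : (∑ i ∈ s, w i) ^ c ≤ ∑ i ∈ s, w i ^ c := by
  classical
  induction s using Finset.induction_on with
  | empty => simp [Real.zero_rpow hc.ne']
  | insert i s hi ih =>
    rw [Finset.sum_insert hi, Finset.sum_insert hi]
    have := Real.rpow_add_le_add_rpow (hw i) (Finset.sum_nonneg fun j _ => hw j : 0 ≤ ∑ j ∈ s, w j)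
      hc.le hc1
    linarith

lemma gf_sum_high {n : ℕ} (hn : 0 < n) (w : Fin n → ℝ) (hw : ∀ i, 0 ≤ w i) (d : ℝ)
    (hd : 1 ≤ d) : (n : ℝ) ^ (1 - d) * (∑ i, w i) ^ d ≤ ∑ i, w i ^ d := by
  have h := Real.rpow_sum_le_const_mul_sum_rpow Finset.univ w hd
  simp only [abs_of_nonneg (hw _), Finset.card_univ, Fintype.card_fin] at h
  have hn' : (0 : ℝ) < n := by exact_mod_cast hn
  have h1 : (n : ℝ) ^ (1 - d) * (n : ℝ) ^ (d - 1) = 1 := by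
    rw [← Real.rpow_add hn']; simp
  calc _ ≤ (n : ℝ) ^ (1 - d) * ((n : ℝ) ^ (d - 1) * ∑ i, w i ^ d) :=
        mul_le_mul_of_nonneg_left h (by positivity)
    _ = _ := by rw [← mul_assoc, h1, one_mul]

lemma gf_term (g r e : ℝ) (hr : r ≠ 0) (he : 1 + r = 2 * e) (h2 : e ≠ 0) :
    g * Real.sign g * |g| ^ r = (g ^ 2) ^ e := by
  have h1 : g * Real.sign g = |g| := by
    rcases lt_trichotomy g 0 with h | h | h
    · rw [Real.sign_of_neg h, abs_of_neg h]; ring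
    · simp [h]
    · rw [Real.sign_of_pos h, abs_of_pos h]; ring
  rw [h1, ← sq_abs, ← Real.rpow_natCast, ← Real.rpow_mul (abs_nonneg g)]
  rcases eq_or_ne g 0 with h | h
  · subst h; simp [h2]
  · have := abs_pos.2 h
    nth_rewrite 1 [← Real.rpow_one |g|]
    rw [← Real.rpow_add this, he]; norm_num

/-- **GenFlow fixed-time convergence** (Theorem 1). If `f` is `C¹`, satisfies the
PL inequality with modulus `μ > 0` and has a unique minimizer `x*`, then any solution
of the GenFlow dynamics `ẋᵢ = -sign(∇ᵢf(x))(|∇ᵢf(x)|^{1/(p-1)} + |∇ᵢf(x)|^{1/(q-1)})`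
with `p > 2`, `q ∈ (1,2)` reaches `x*` by the time
`T̄ = 1/(a(1-γ₁)) + 1/(b(γ₂-1))`, `γ₁ = p/(2(p-1))`, `γ₂ = q/(2(q-1))`,
`a = (2μ)^{γ₁}`, `b = n^{(q-2)/(2(q-1))} (2μ)^{γ₂}`. -/
theorem genFlow_fixed_time_convergence
    {n : ℕ} (f : (Fin n → ℝ) → ℝ) (hf : ContDiff ℝ 1 f)
    (μ : ℝ) (hμ : 0 < μ)
    (xstar : Fin n → ℝ) (fstar : ℝ) (hfstar : fstar = f xstar)
    (hmin : ∀ y, fstar ≤ f y)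
    (huniq : ∀ y, (∀ z, f y ≤ f z) → y = xstar)
    (hPL : ∀ y, μ * (f y - fstar) ≤ (1 / 2) * ∑ i, grad f y i ^ 2)
    (p q : ℝ) (hp : 2 < p) (hq : q ∈ Set.Ioo (1 : ℝ) 2)
    (x : ℝ → (Fin n → ℝ))
    (hx : ∀ t : ℝ, 0 ≤ t → ∀ i, HasDerivAt (fun s => x s i)
      (-(Real.sign (grad f (x t) i) *
          (|grad f (x t) i| ^ (1 / (p - 1)) + |grad f (x t) i| ^ (1 / (q - 1))))) t) :
    ∀ t : ℝ,
      1 / ((2 * μ) ^ (p / (2 * (p - 1))) * (1 - p / (2 * (p - 1)))) +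
        1 / ((n : ℝ) ^ ((q - 2) / (2 * (q - 1))) * (2 * μ) ^ (q / (2 * (q - 1))) *
          (q / (2 * (q - 1)) - 1)) ≤ t →
      x t = xstar := by
  intro t ht
  obtain ⟨hq1, hq2⟩ := hq
  rcases Nat.eq_zero_or_pos n with hn | hn
  · subst hn; exact Subsingleton.elim _ _
  have hn' : (0 : ℝ) < n := by exact_mod_cast hn
  have hp1 : 0 < p - 1 := by linarith
  have hq1' : 0 < q - 1 := by linarith
  set c := p / (2 * (p - 1)) with hcdef
  set d := q / (2 * (q - 1)) with hddef
  have hc0 : 0 < c := by rw [hcdef]; have : 0 < p := by linarith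
                         positivity
  have hc1 : c < 1 := by rw [hcdef, div_lt_one (by positivity)]; linarith
  have hd1 : 1 < d := by rw [hddef, one_lt_div (by positivity)]; linarith
  have hde : (q - 2) / (2 * (q - 1)) = 1 - d := by rw [hddef]; field_simp; ring
  have hce : 1 + 1 / (p - 1) = 2 * c := by rw [hcdef]; field_simp; ring
  have hde2 : 1 + 1 / (q - 1) = 2 * d := by rw [hddef]; field_simp; ring
  rw [hde] at ht
  have h2μ : 0 < 2 * μ := by positivity
  have key := gf_lyap (fun s => f (x s) - fstar)
    (fun s => -(∑ i, ((grad f (x s) i) ^ 2) ^ c + ∑ i, ((grad f (x s) i) ^ 2) ^ d))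
    ((2 * μ) ^ c) ((n : ℝ) ^ (1 - d) * (2 * μ) ^ d) c d (by positivity) (by positivity) hc1 hd1
    ?_ (fun s => by linarith [hmin (x s)]) ?_ t ht
  · apply huniq
    intro z
    have := hmin z
    try simp only at key
    linarith
  · intro s hs
    have hxs := hasDerivAt_pi.2 (hx s hs)
    have hfs := ((hf.differentiable one_ne_zero) (x s)).hasFDerivAt.comp_hasDerivAt s hxs
    refine (hfs.sub_const fstar).congr_deriv ?_
    rw [← Finset.sum_add_distrib, ← Finset.sum_neg_distrib]
    conv_lhs => rw [pi_eq_sum_univ' (fun i => -(Real.sign (grad f (x s) i) *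
          (|grad f (x s) i| ^ (1 / (p - 1)) + |grad f (x s) i| ^ (1 / (q - 1)))))]
    rw [map_sum]
    refine Finset.sum_congr rfl fun i _ => ?_
    rw [map_smul, smul_eq_mul,
      ← gf_term (grad f (x s) i) (1 / (p - 1)) c (by positivity) hce hc0.ne',
      ← gf_term (grad f (x s) i) (1 / (q - 1)) d (by positivity) hde2 (by positivity)]
    have : (fderiv ℝ f (x s)) (Pi.single i 1) = grad f (x s) i := rfl
    rw [this]
    ring
  · intro s hs
    have hV : 0 ≤ f (x s) - fstar := by linarith [hmin (x s)]
    have hS : 2 * μ * (f (x s) - fstar) ≤ ∑ i, grad f (x s) i ^ 2 := by linarith [hPL (x s)]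
    have h1 := gf_sum_low Finset.univ (fun i => grad f (x s) i ^ 2) (fun i => sq_nonneg _) c hc0 hc1.le
    have h2 := gf_sum_high hn (fun i => grad f (x s) i ^ 2) (fun i => sq_nonneg _) d hd1.le
    have h3 := Real.rpow_le_rpow (by positivity) hS hc0.le
    have h4 := Real.rpow_le_rpow (by positivity) hS (by linarith : 0 ≤ d)
    rw [Real.mul_rpow h2μ.le hV] at h3 h4
    have h5 := mul_le_mul_of_nonneg_left h4 (by positivity : 0 ≤ (n : ℝ) ^ (1 - d))
    try simp only at h1 h2 ⊢
    rw [← mul_assoc] at h5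
    linarith
end

section
/- Let f : ℝⁿ → ℝ be continuously differentiable and satisfy the PL inequality with modulus μ > 0, with f* = min f. Fix p > 2 and q ∈ (1,2), and let x : [0,∞) → ℝⁿ be a differentiable solution of the GenFlow dynamics ẋᵢ(t) = −sign(∇ᵢf(x(t)))·( |∇ᵢf(x(t))|^{1/(p−1)} + |∇ᵢf(x(t))|^{1/(q−1)} ). Then for every t ≥ 0, the derivative of t ↦ f(x(t)) − f* satisfies d/dt ( f(x(t)) − f* ) ≤ −( 2μ (f(x(t)) − f*) )^{p/(2(p−1))} − n^{(q−2)/(2(q−1))} · ( 2μ (f(x(t)) − f*) )^{q/(2(q−1))}. -/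
theorem aux_sum_rpow {ι : Type*} (s : Finset ι) (a : ι → ℝ) (ha : ∀ i, 0 ≤ a i) (r : ℝ)
    (h0 : 0 < r) (h1 : r ≤ 1) : (∑ i ∈ s, a i) ^ r ≤ ∑ i ∈ s, a i ^ r := by
  classical
  induction s using Finset.induction_on with
  | empty => simp [Real.zero_rpow h0.ne']
  | insert j s hj ih =>
    rw [Finset.sum_insert hj, Finset.sum_insert hj]
    have := Real.rpow_add_le_add_rpow (ha j) (Finset.sum_nonneg fun i _ => ha i : 0 ≤ ∑ i ∈ s, a i)
      h0.le h1
    linarith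

theorem aux_sign (g p : ℝ) (hp : 1 < p) :
    g * (Real.sign g * |g| ^ (1 / (p - 1))) = (g ^ 2) ^ (p / (2 * (p - 1))) := by
  have hp' : p - 1 ≠ 0 := by linarith
  have hp1 : 0 < p - 1 := by linarith
  have e : g * Real.sign g = |g| := by
    rcases lt_trichotomy g 0 with h | h | h
    · rw [Real.sign_of_neg h, abs_of_neg h]; ring
    · simp [h]
    · rw [Real.sign_of_pos h, abs_of_pos h]; ring
  rw [← mul_assoc, e, ← sq_abs, ← Real.rpow_natCast, ← Real.rpow_mul (abs_nonneg g)]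
  have e2 : ((2 : ℕ) : ℝ) * (p / (2 * (p - 1))) = 1 + 1 / (p - 1) := by
    push_cast; field_simp; ring
  rw [e2, Real.rpow_add' (abs_nonneg g) (by positivity), Real.rpow_one]

/-- **Key differential inequality in the proof of Theorem 1.** Along any solution of
the GenFlow dynamics for a `C¹` function `f` satisfying the PL inequality with modulus
`μ > 0`, the Lyapunov function `f(x(t)) - f*` satisfies
`d/dt (f(x(t)) - f*) ≤ -(2μ(f(x(t))-f*))^{p/(2(p-1))} - n^{(q-2)/(2(q-1))} (2μ(f(x(t))-f*))^{q/(2(q-1))}`. -/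
theorem genFlow_lyapunov_differential_inequality
    {n : ℕ} (f : (Fin n → ℝ) → ℝ) (hf : ContDiff ℝ 1 f)
    (μ : ℝ) (hμ : 0 < μ)
    (fstar : ℝ) (hfstar : ∃ xstar, f xstar = fstar ∧ ∀ y, fstar ≤ f y)
    (hPL : ∀ y, μ * (f y - fstar) ≤ (1 / 2) * ∑ i, grad f y i ^ 2)
    (p q : ℝ) (hp : 2 < p) (hq : q ∈ Set.Ioo (1 : ℝ) 2)
    (x : ℝ → (Fin n → ℝ))
    (hx : ∀ t : ℝ, 0 ≤ t → ∀ i, HasDerivAt (fun s => x s i)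
      (-(Real.sign (grad f (x t) i) *
          (|grad f (x t) i| ^ (1 / (p - 1)) + |grad f (x t) i| ^ (1 / (q - 1))))) t) :
    ∀ t : ℝ, 0 ≤ t →
      deriv (fun s => f (x s) - fstar) t ≤
        -(2 * μ * (f (x t) - fstar)) ^ (p / (2 * (p - 1))) -
          (n : ℝ) ^ ((q - 2) / (2 * (q - 1))) *
            (2 * μ * (f (x t) - fstar)) ^ (q / (2 * (q - 1))) := by
  intro t ht
  obtain ⟨hq1, hq2⟩ := hq
  obtain ⟨xs, -, hmin⟩ := hfstar
  set g := grad f (x t) with hg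
  set v : Fin n → ℝ := fun i => -(Real.sign (g i) *
          (|g i| ^ (1 / (p - 1)) + |g i| ^ (1 / (q - 1)))) with hv
  have hxd : HasDerivAt x v t := hasDerivAt_pi.2 (hx t ht)
  have hfd : HasFDerivAt f (fderiv ℝ f (x t)) (x t) :=
    (hf.differentiable (by norm_num) (x t)).hasFDerivAt
  have hd : HasDerivAt (fun s => f (x s) - fstar) (fderiv ℝ f (x t) v) t :=
    (hfd.comp_hasDerivAt t hxd).sub_const fstar
  rw [hd.deriv]
  have hlin : fderiv ℝ f (x t) v = ∑ i, v i * g i := by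
    conv_lhs => rw [pi_eq_sum_univ' v]
    rw [map_sum]
    refine Finset.sum_congr rfl fun i _ => ?_
    rw [map_smul, smul_eq_mul, hg, grad]
  have hsum : fderiv ℝ f (x t) v = -(∑ i, (g i ^ 2) ^ (p / (2 * (p - 1))))
      - ∑ i, (g i ^ 2) ^ (q / (2 * (q - 1))) := by
    rw [hlin, ← Finset.sum_neg_distrib, ← Finset.sum_sub_distrib]
    refine Finset.sum_congr rfl fun i _ => ?_
    rw [← aux_sign (g i) p (by linarith), ← aux_sign (g i) q hq1, hv]
    ring
  have hp1 : 0 < p - 1 := by linarith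
  have hq1' : 0 < q - 1 := by linarith
  have hA : 0 ≤ 2 * μ * (f (x t) - fstar) :=
    mul_nonneg (by positivity) (sub_nonneg.2 (hmin _))
  have hAG : 2 * μ * (f (x t) - fstar) ≤ ∑ i, g i ^ 2 := by
    have := hPL (x t)
    rw [← hg] at this
    linarith
  have h1 := aux_sum_rpow Finset.univ (fun i => g i ^ 2) (fun i => sq_nonneg _)
    (p / (2 * (p - 1))) (by positivity) (by rw [div_le_one (by positivity)]; linarith)
  have h1' := Real.rpow_le_rpow hA hAG (z := p / (2 * (p - 1))) (by positivity)
  have hβ : 1 ≤ q / (2 * (q - 1)) := by rw [one_le_div (by positivity)]; linarith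
  have h2 := Real.rpow_sum_le_const_mul_sum_rpow_of_nonneg (s := Finset.univ)
    (f := fun i => g i ^ 2) hβ (fun i _ => sq_nonneg _)
  have h2' := Real.rpow_le_rpow hA hAG (z := q / (2 * (q - 1))) (by positivity)
  have h3 : (n : ℝ) ^ ((q - 2) / (2 * (q - 1))) *
            (2 * μ * (f (x t) - fstar)) ^ (q / (2 * (q - 1)))
      ≤ ∑ i, (g i ^ 2) ^ (q / (2 * (q - 1))) := by
    have hS : 0 ≤ ∑ i, (g i ^ 2) ^ (q / (2 * (q - 1))) :=
      Finset.sum_nonneg fun i _ => Real.rpow_nonneg (sq_nonneg _) _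
    rcases Nat.eq_zero_or_pos n with hn | hn
    · have : (n : ℝ) ^ ((q - 2) / (2 * (q - 1))) = 0 := by
        rw [hn, Nat.cast_zero, Real.zero_rpow]
        exact div_ne_zero (by linarith) (by positivity)
      rw [this, zero_mul]; exact hS
    · have hn' : (0 : ℝ) < n := by exact_mod_cast hn
      have h4 := h2'.trans h2
      rw [Finset.card_univ, Fintype.card_fin] at h4
      refine (mul_le_mul_of_nonneg_left h4 (Real.rpow_nonneg hn'.le _)).trans (le_of_eq ?_)
      rw [← mul_assoc, ← Real.rpow_add hn']
      have : (q - 2) / (2 * (q - 1)) + (q / (2 * (q - 1)) - 1) = 0 := by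
        field_simp; ring
      rw [this, Real.rpow_zero, one_mul]
  rw [hsum]
  linarith [h1'.trans h1]
end

section
/- Let f : ℝⁿ → ℝ be continuously differentiable, fix p > 2 and q ∈ (1,2), and let x : [0,∞) → ℝⁿ be a differentiable solution of the GenFlow dynamics ẋᵢ(t) = −sign(∇ᵢf(x(t)))·( |∇ᵢf(x(t))|^{1/(p−1)} + |∇ᵢf(x(t))|^{1/(q−1)} ). Then for every t ≥ 0, d/dt f(x(t)) = −∑_{i=1}^n |∇ᵢf(x(t))|^{p/(p−1)} − ∑_{i=1}^n |∇ᵢf(x(t))|^{q/(q−1)} ≤ −n^{−1/(p−1)} ‖∇f(x(t))‖₁^{p/(p−1)} − n^{−1/(q−1)} ‖∇f(x(t))‖₁^{q/(q−1)}, where ‖·‖₁ is the ℓ¹ norm on ℝⁿ. -/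
theorem genFlow_norm_aux {n : ℕ} (g : Fin n → ℝ) (r : ℝ) (hr : 1 < r) :
    (n : ℝ) ^ (-1 / (r - 1)) * (∑ i, |g i|) ^ (r / (r - 1)) ≤ ∑ i, |g i| ^ (r / (r - 1)) := by
  have hr1 : 0 < r - 1 := by linarith
  have h1 : 1 ≤ r / (r - 1) := by rw [le_div_iff₀ hr1]; linarith
  have h2 : r / (r - 1) - 1 = 1 / (r - 1) := by field_simp; ring
  have key := Real.rpow_sum_le_const_mul_sum_rpow Finset.univ g h1
  rw [h2, Finset.card_univ, Fintype.card_fin] at key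
  rcases Nat.eq_zero_or_pos n with h0 | h0
  · subst h0
    have : r / (r - 1) ≠ 0 := by positivity
    simp [Real.zero_rpow this]
  · have hn : (0 : ℝ) < n := by exact_mod_cast h0
    rw [neg_div, Real.rpow_neg hn.le, inv_mul_le_iff₀ (Real.rpow_pos_of_pos hn _)]
    exact key

theorem genFlow_term_aux (g r : ℝ) (hr : 1 < r) :
    Real.sign g * |g| ^ (1 / (r - 1)) * g = |g| ^ (r / (r - 1)) := by
  have hr1 : 0 < r - 1 := by linarith
  have h2 : r / (r - 1) = 1 / (r - 1) + 1 := by field_simp; ring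
  have h3 : Real.sign g * g = |g| := by
    rcases lt_trichotomy g 0 with h | h | h
    · rw [Real.sign_of_neg h, abs_of_neg h]; ring
    · simp [h]
    · rw [Real.sign_of_pos h, abs_of_pos h]; ring
  rw [h2, Real.rpow_add_one' (abs_nonneg g) (by positivity), ← h3]
  ring

/-- **ℓ¹ descent estimate from the proof of Theorem 3.** Along any solution of the
GenFlow dynamics,
`d/dt f(x(t)) = -∑ᵢ |∇ᵢf(x(t))|^{p/(p-1)} - ∑ᵢ |∇ᵢf(x(t))|^{q/(q-1)}`
` ≤ -n^{-1/(p-1)} ‖∇f(x(t))‖₁^{p/(p-1)} - n^{-1/(q-1)} ‖∇f(x(t))‖₁^{q/(q-1)}`. -/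
theorem genFlow_descent_rate_l1
    {n : ℕ} (f : (Fin n → ℝ) → ℝ) (hf : ContDiff ℝ 1 f)
    (p q : ℝ) (hp : 2 < p) (hq : q ∈ Set.Ioo (1 : ℝ) 2)
    (x : ℝ → (Fin n → ℝ))
    (hx : ∀ t : ℝ, 0 ≤ t → ∀ i, HasDerivAt (fun s => x s i)
      (-(Real.sign (grad f (x t) i) *
          (|grad f (x t) i| ^ (1 / (p - 1)) + |grad f (x t) i| ^ (1 / (q - 1))))) t) :
    ∀ t : ℝ, 0 ≤ t →
      deriv (fun s => f (x s)) t =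
        -(∑ i, |grad f (x t) i| ^ (p / (p - 1))) -
          ∑ i, |grad f (x t) i| ^ (q / (q - 1)) ∧
      deriv (fun s => f (x s)) t ≤
        -(n : ℝ) ^ (-1 / (p - 1)) * (∑ i, |grad f (x t) i|) ^ (p / (p - 1)) -
          (n : ℝ) ^ (-1 / (q - 1)) * (∑ i, |grad f (x t) i|) ^ (q / (q - 1)) := by
  intro t ht
  have hq1 := hq.1
  have hd : HasDerivAt x (fun i => (-(Real.sign (grad f (x t) i) *
          (|grad f (x t) i| ^ (1 / (p - 1)) + |grad f (x t) i| ^ (1 / (q - 1)))))) t :=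
    hasDerivAt_pi.2 (hx t ht)
  have hfd : HasFDerivAt f (fderiv ℝ f (x t)) (x t) :=
    ((hf.differentiable (by norm_num)) (x t)).hasFDerivAt
  have hc := (hfd.comp_hasDerivAt t hd).deriv
  have hlin : ∀ v : Fin n → ℝ, fderiv ℝ f (x t) v = ∑ i, v i * grad f (x t) i := by
    intro v
    conv_lhs => rw [pi_eq_sum_univ' v]
    simp only [map_sum, map_smul, smul_eq_mul, grad]
  have heq : deriv (fun s => f (x s)) t =
        -(∑ i, |grad f (x t) i| ^ (p / (p - 1))) -
          ∑ i, |grad f (x t) i| ^ (q / (q - 1)) := by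
    refine hc.trans ?_
    rw [hlin, ← Finset.sum_neg_distrib, ← Finset.sum_sub_distrib]
    refine Finset.sum_congr rfl fun i _ => ?_
    rw [← genFlow_term_aux _ p (by linarith), ← genFlow_term_aux _ q hq1]
    ring
  refine ⟨heq, ?_⟩
  rw [heq]
  have a := genFlow_norm_aux (grad f (x t)) p (by linarith)
  have b := genFlow_norm_aux (grad f (x t)) q hq1
  linarith
end

section
/- Let f : ℝⁿ → ℝ be twice continuously differentiable with a non-degenerate saddle point x* (i.e., ∇f(x*) = 0 and H = D²f(x*) is nonsingular), and let Λ_max and Λ_min denote the maximum and minimum absolute eigenvalues of H. Fix p > 2, q ∈ (1,2) and let x : [0,∞) → ℝⁿ be a differentiable solution of the GenFlow dynamics ẋᵢ(t) = −sign(∇ᵢf(x(t)))·(|∇ᵢf(x(t))|^{1/(p−1)} + |∇ᵢf(x(t))|^{1/(q−1)}) that does not converge to x*. Then there exist constants k₁ > 1/2 and k₂ ∈ (0,1) such that for all sufficiently small r > 0, the one-dimensional Lebesgue measure of the set {t ≥ 0 : x(t) ∈ B_r(x*) \ {x*}} is at most min{ n^{1/(p−1)} · (8k₁ / k₂^{p/(p−1)})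 · Λ_max^{(p−2)/(2(p−1))} / Λ_min^{p/(2(p−1))} · r^{(p−2)/(p−1)}, n^{1/(q−1)} · (8k₁ / k₂^{q/(q−1)}) · Λ_max^{(q−2)/(2(q−1))} / Λ_min^{q/(2(q−1))} · r^{(q−2)/(q−1)} }. -/
open Matrix MeasureTheory

/-- The Hessian matrix of `f : ℝⁿ → ℝ` at `x`, as the matrix of second partial
derivatives. -/
noncomputable def hess {n : ℕ} (f : (Fin n → ℝ) → ℝ) (x : Fin n → ℝ) :
    Matrix (Fin n) (Fin n) ℝ :=
  Matrix.of fun i j =>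
    fderiv ℝ (fun y => fderiv ℝ f y (Pi.single j 1)) x (Pi.single i 1)

/-- One-dimensional area estimate. -/
lemma vol_le_of_deriv {S : Set ℝ} (hS : MeasurableSet S) (u u' : ℝ → ℝ)
    (hu : ∀ t ∈ S, HasDerivAt u (u' t) t) (hinj : Set.InjOn u S)
    (M a s : ℝ) (ha : 0 < a) (hs1 : s < 1)
    (hpos : ∀ t ∈ S, 0 < u t) (hM : ∀ t ∈ S, u t ≤ M)
    (hd : ∀ t ∈ S, a * u t ^ s ≤ |u' t|) :
    volume S ≤ ENNReal.ofReal (M ^ (1 - s) / ((1 - s) * a)) := by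
  have hs : 0 < 1 - s := by linarith
  have hw : ∀ t ∈ S, HasDerivWithinAt (fun t => u t ^ (1 - s))
      (u' t * (1 - s) * u t ^ (1 - s - 1)) S t := fun t ht =>
    ((hu t ht).rpow_const (Or.inl (hpos t ht).ne')).hasDerivWithinAt
  have hinj2 : Set.InjOn (fun t => u t ^ (1 - s)) S := by
    intro t ht t' ht' h
    exact hinj ht ht' ((Real.rpow_left_inj (hpos t ht).le (hpos t' ht').le hs.ne').1 h)
  have key := lintegral_image_eq_lintegral_abs_deriv_mul hS hw hinj2 (fun _ => 1)
  have himg : (fun t => u t ^ (1 - s)) '' S ⊆ Set.Icc 0 (M ^ (1 - s)) := by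
    rintro _ ⟨t, ht, rfl⟩
    exact ⟨Real.rpow_nonneg (hpos t ht).le _,
      Real.rpow_le_rpow (hpos t ht).le (hM t ht) hs.le⟩
  have h1 : volume ((fun t => u t ^ (1 - s)) '' S) ≤ ENNReal.ofReal (M ^ (1 - s)) := by
    calc _ ≤ volume (Set.Icc 0 (M ^ (1 - s))) := measure_mono himg
      _ = _ := by rw [Real.volume_Icc, sub_zero]
  have h2 : ENNReal.ofReal ((1 - s) * a) * volume S ≤ ENNReal.ofReal (M ^ (1 - s)) := by
    refine le_trans ?_ h1
    rw [setLIntegral_one] at key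
    rw [key, ← setLIntegral_const]
    refine setLIntegral_mono' hS fun t ht => ?_
    rw [mul_one]
    apply ENNReal.ofReal_le_ofReal
    have hp := hpos t ht
    rw [abs_mul, abs_mul, abs_of_pos hs, abs_of_pos (Real.rpow_pos_of_pos hp _)]
    have h3 : u t ^ (1 - s - 1) * u t ^ s = 1 := by
      rw [← Real.rpow_add hp]; simp
    have h4 := Real.rpow_pos_of_pos hp (1 - s - 1)
    have h5 := mul_le_mul_of_nonneg_right (hd t ht) (mul_pos hs h4).le
    calc (1 - s) * a = (1 - s) * a * (u t ^ (1 - s - 1) * u t ^ s) := by rw [h3, mul_one]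
      _ = a * u t ^ s * ((1 - s) * u t ^ (1 - s - 1)) := by ring
      _ ≤ _ := h5.trans (le_of_eq (by ring))
  have h6 : 0 < (1 - s) * a := mul_pos hs ha
  rw [ENNReal.ofReal_div_of_pos h6, ENNReal.le_div_iff_mul_le (Or.inl (by simpa using h6))
    (Or.inl ENNReal.ofReal_ne_top), mul_comm]
  exact h2

/-- Monotone with strictly negative derivative on `S` implies injective on `S`. -/
lemma injOn_of_antitone {S : Set ℝ} (hS : S ⊆ Set.Ici 0) (h h' : ℝ → ℝ)
    (hd : ∀ t, 0 ≤ t → HasDerivAt h (h' t) t) (hle : ∀ t, 0 ≤ t → h' t ≤ 0)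
    (hlt : ∀ t ∈ S, h' t < 0) : Set.InjOn h S := by
  have hanti : AntitoneOn h (Set.Ici 0) := by
    apply antitoneOn_of_deriv_nonpos (convex_Ici 0)
    · exact fun t ht => (hd t ht).continuousAt.continuousWithinAt
    · exact fun t ht => (hd t (interior_subset ht)).differentiableAt.differentiableWithinAt
    · intro t ht
      rw [(hd t (interior_subset ht)).deriv]
      exact hle t (interior_subset ht)
  have main : ∀ t ∈ S, ∀ t' ∈ S, t < t' → h t ≠ h t' := by
    intro t ht t' ht' htt heq
    have h0 : (0 : ℝ) ≤ t := hS ht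
    have hc : h =ᶠ[nhdsWithin t (Set.Ici t)] fun _ => h t := by
      filter_upwards [Icc_mem_nhdsGE htt] with y hy
      have a1 := hanti h0 (h0.trans hy.1) hy.1
      have a2 := hanti (h0.trans hy.1) (h0.trans htt.le) hy.2
      linarith
    have w1 := (hd t h0).hasDerivWithinAt (s := Set.Ici t)
    have w2 : HasDerivWithinAt h 0 (Set.Ici t) t :=
      (hasDerivWithinAt_const t _ (h t)).congr_of_eventuallyEq hc rfl
    have := (uniqueDiffWithinAt_Ici t).eq_deriv _ w1 w2
    exact (hlt t ht).ne this
  intro t ht t' ht' heq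
  rcases lt_trichotomy t t' with hl | hl | hl
  · exact absurd heq (main t ht t' ht' hl)
  · exact hl
  · exact absurd heq.symm (main _ ht' _ ht hl)

/-- Local estimates at a nondegenerate critical point. -/
lemma local_est {n : ℕ} (f : (Fin n → ℝ) → ℝ) (hf : ContDiff ℝ 2 f)
    (xs : Fin n → ℝ) (hcrit : fderiv ℝ f xs = 0) (hnd : IsUnit (hess f xs).det) :
    ∃ c C δ : ℝ, 0 < c ∧ 0 < C ∧ 0 < δ ∧ ∀ y, ‖y - xs‖ < δ →
      c * ‖y - xs‖ ≤ ‖grad f y‖ ∧ |f y - f xs| ≤ C * ‖y - xs‖ ^ 2 := by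
  have hD : ContDiff ℝ 1 (fderiv ℝ f) := hf.fderiv_right (by norm_num)
  have hDd : DifferentiableAt ℝ (fderiv ℝ f) xs := (hD.differentiable (by norm_num)) xs
  set L := fderiv ℝ (fderiv ℝ f) xs with hL
  have hLd : HasFDerivAt (fderiv ℝ f) L xs := hDd.hasFDerivAt
  -- upper bound on the derivative
  have hO := hLd.isBigO_sub
  obtain ⟨C, hC, hO⟩ := hO.exists_pos
  rw [Asymptotics.isBigOWith_iff] at hO
  obtain ⟨δ₁, hδ₁, hO⟩ := Metric.eventually_nhds_iff_ball.1 hO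
  -- gradient
  let G : (Fin n → ℝ) →L[ℝ] (Fin n → ℝ) :=
    ContinuousLinearMap.pi fun j => (ContinuousLinearMap.apply ℝ ℝ (Pi.single j (1:ℝ))).comp L
  have hG : HasFDerivAt (grad f) G xs := by
    rw [hasFDerivAt_pi']
    intro j
    exact ((ContinuousLinearMap.apply ℝ ℝ (Pi.single j (1:ℝ))).hasFDerivAt).comp xs hLd
  have hGH : ∀ v, G v = v ᵥ* hess f xs := by
    intro v
    have hcol : ∀ j i, hess f xs i j = L (Pi.single i 1) (Pi.single j 1) := by
      intro j i
      have : HasFDerivAt (fun y => fderiv ℝ f y (Pi.single j 1))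
        ((ContinuousLinearMap.apply ℝ ℝ (Pi.single j (1:ℝ))).comp L) xs := (hasFDerivAt_pi'.1 hG) j
      simp only [hess, Matrix.of_apply]
      rw [this.fderiv]; rfl
    ext j
    have hv : v = ∑ i, v i • (Pi.single i (1:ℝ) : Fin n → ℝ) := by
      ext k; simp [Finset.sum_apply, Pi.single_apply]
    change L v (Pi.single j 1) = _
    conv_lhs => rw [hv]
    simp [Matrix.vecMul, dotProduct, hcol]
  have hker : LinearMap.ker (G : (Fin n → ℝ) →ₗ[ℝ] (Fin n → ℝ)) = ⊥ := by
    rw [LinearMap.ker_eq_bot']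
    intro v hv
    have hv : v ᵥ* hess f xs = 0 := by rw [← hGH]; exact hv
    exact Matrix.eq_zero_of_vecMul_eq_zero hnd.ne_zero hv
  obtain ⟨K, hK, hanti⟩ := LinearMap.exists_antilipschitzWith _ hker
  have hKr : (0:ℝ) < K := hK
  have hGlow : ∀ v, ‖v‖ ≤ K * ‖G v‖ := fun v => by
    simpa using hanti.le_mul_dist v 0
  have hgx : grad f xs = 0 := by ext i; simp [grad, hcrit]
  have ho := hG.isLittleO
  have ho := ho.def (show (0:ℝ) < 1 / (2 * K) by positivity)
  obtain ⟨δ₂, hδ₂, ho⟩ := Metric.eventually_nhds_iff_ball.1 ho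
  refine ⟨1 / (2 * K), C, min δ₁ δ₂, by positivity, hC, lt_min hδ₁ hδ₂, fun y hy => ⟨?_, ?_⟩⟩
  · have h1 := ho y (by rw [mem_ball_iff_norm]; exact hy.trans_le (min_le_right _ _))
    rw [hgx, sub_zero] at h1
    have h2 := hGlow (y - xs)
    have h3 : ‖G (y - xs)‖ ≤ ‖grad f y‖ + ‖grad f y - G (y - xs)‖ := by
      have := norm_sub_le (grad f y) (grad f y - G (y - xs))
      simpa using this
    have h4 : ‖y - xs‖ / K ≤ ‖G (y - xs)‖ := by
      rw [div_le_iff₀ hKr]; linarith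
    have h5 : ‖y - xs‖ / K = 1 / (2 * K) * ‖y - xs‖ + 1 / (2 * K) * ‖y - xs‖ := by
      field_simp; ring
    linarith
  · have hb : ∀ z ∈ Metric.closedBall xs ‖y - xs‖, ‖fderiv ℝ f z‖ ≤ C * ‖y - xs‖ := by
      intro z hz
      rw [mem_closedBall_iff_norm] at hz
      have := hO z (by rw [mem_ball_iff_norm]; exact hz.trans_lt (hy.trans_le (min_le_left _ _)))
      rw [hcrit, sub_zero] at this
      exact this.trans (by gcongr)
    have := (convex_closedBall xs ‖y - xs‖).norm_image_sub_le_of_norm_fderiv_le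
      (fun z _ => (hf.differentiable (by norm_num)) z) hb
      (Metric.mem_closedBall_self (norm_nonneg _))
      (by rw [mem_closedBall_iff_norm] : y ∈ Metric.closedBall xs ‖y - xs‖)
    rw [Real.norm_eq_abs] at this
    linarith [this, sq (‖y - xs‖), mul_assoc C ‖y - xs‖ ‖y - xs‖]

lemma sup_le_sqrt {n : ℕ} (v : Fin n → ℝ) : ‖v‖ ≤ Real.sqrt (v ⬝ᵥ v) := by
  rw [pi_norm_le_iff_of_nonneg (Real.sqrt_nonneg _)]
  intro i
  apply Real.le_sqrt_of_sq_le
  rw [Real.norm_eq_abs, sq_abs, sq]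
  exact Finset.single_le_sum (f := fun i => v i * v i) (fun j _ => mul_self_nonneg _)
    (Finset.mem_univ i)

/-- The main time bound with an unspecified constant. -/
lemma time_bound {n : ℕ} (f : (Fin n → ℝ) → ℝ) (hf : ContDiff ℝ 2 f)
    (xs : Fin n → ℝ) (hcrit : fderiv ℝ f xs = 0) (hnd : IsUnit (hess f xs).det)
    (hn : 0 < n) (p q : ℝ) (hp : 2 < p) (x : ℝ → (Fin n → ℝ))
    (hx : ∀ t : ℝ, 0 ≤ t → ∀ i, HasDerivAt (fun s => x s i)
      (-(Real.sign (grad f (x t) i) *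
          (|grad f (x t) i| ^ (1 / (p - 1)) + |grad f (x t) i| ^ (1 / (q - 1))))) t) :
    ∃ K r₀ : ℝ, 0 < K ∧ 0 < r₀ ∧ ∀ r : ℝ, 0 < r → r < r₀ →
      volume {t : ℝ | 0 ≤ t ∧ Real.sqrt ((x t - xs) ⬝ᵥ (x t - xs)) < r ∧ x t ≠ xs} ≤
        ENNReal.ofReal (K * r ^ ((p - 2) / (p - 1))) := by
  obtain ⟨c, C, δ, hc, hC, hδ, hloc⟩ := local_est f hf xs hcrit hnd
  have hp1 : 0 < p - 1 := by linarith
  set s : ℝ := p / (2 * (p - 1)) with hs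
  have hs0 : 0 < s := by positivity
  have hs1 : s < 1 := by rw [hs, div_lt_one (by positivity)]; linarith
  have h2s : 1 + 1 / (p - 1) = 2 * s := by rw [hs]; field_simp; ring
  have h2s' : (p - 2) / (p - 1) = 2 * (1 - s) := by rw [hs]; field_simp; ring
  set a : ℝ := c ^ (2 * s) / C ^ s with ha
  have ha0 : 0 < a := div_pos (Real.rpow_pos_of_pos hc _) (Real.rpow_pos_of_pos hC _)
  have h1s : 0 < 1 - s := by linarith
  set h : ℝ → ℝ := fun t => f (x t) - f xs with hh
  let x' : ℝ → Fin n → ℝ := fun t i => -(Real.sign (grad f (x t) i) *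
          (|grad f (x t) i| ^ (1 / (p - 1)) + |grad f (x t) i| ^ (1 / (q - 1))))
  have hx' : ∀ t, 0 ≤ t → HasDerivAt x (x' t) t := fun t ht => hasDerivAt_pi.2 (hx t ht)
  set h' : ℝ → ℝ := fun t => fderiv ℝ f (x t) (x' t) with hh'
  have hder : ∀ t, 0 ≤ t → HasDerivAt h (h' t) t := by
    intro t ht
    have := ((hf.differentiable (by norm_num)) (x t)).hasFDerivAt.comp_hasDerivAt t (hx' t ht)
    exact this.sub_const _
  have hform : ∀ t, h' t = -∑ i, |grad f (x t) i| *
      (|grad f (x t) i| ^ (1 / (p - 1)) + |grad f (x t) i| ^ (1 / (q - 1))) := by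
    intro t
    have hv : x' t = ∑ i, x' t i • (Pi.single i (1:ℝ) : Fin n → ℝ) := by
      ext k; simp [Finset.sum_apply, Pi.single_apply]
    simp only [hh']
    rw [hv, map_sum, ← Finset.sum_neg_distrib]
    refine Finset.sum_congr rfl fun i _ => ?_
    rw [map_smul, smul_eq_mul]
    change x' t i * grad f (x t) i = _
    have : |grad f (x t) i| = Real.sign (grad f (x t) i) * grad f (x t) i := by
      rcases lt_trichotomy (grad f (x t) i) 0 with hl | hl | hl
      · rw [Real.sign_of_neg hl, abs_of_neg hl]; ring
      · simp [hl]
      · rw [Real.sign_of_pos hl, abs_of_pos hl]; ring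
    simp only [x']
    generalize |grad f (x t) i| ^ (1 / (p - 1)) + |grad f (x t) i| ^ (1 / (q - 1)) = w
    rw [this]; ring
  have hterm : ∀ t i, 0 ≤ |grad f (x t) i| *
      (|grad f (x t) i| ^ (1 / (p - 1)) + |grad f (x t) i| ^ (1 / (q - 1))) := by
    intro t i; positivity
  have hnonpos : ∀ t, 0 ≤ t → h' t ≤ 0 := by
    intro t _
    rw [hform, neg_nonpos]
    exact Finset.sum_nonneg fun i _ => hterm t i
  have hbig : ∀ t, x t ≠ xs → ‖x t - xs‖ < δ → (c * ‖x t - xs‖) ^ (2 * s) ≤ - h' t := by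
    intro t hne hlt
    have hl := (hloc _ hlt).1
    have hpos : 0 < ‖x t - xs‖ := norm_pos_iff.2 (sub_ne_zero.2 hne)
    have : Nonempty (Fin n) := ⟨⟨0, hn⟩⟩
    obtain ⟨j, hj⟩ : ∃ j, ‖grad f (x t)‖ = |grad f (x t) j| := by
      obtain ⟨j, _, hj⟩ := Finset.exists_mem_eq_sup' (Finset.univ_nonempty (α := Fin n))
        (fun i => |grad f (x t) i|)
      refine ⟨j, le_antisymm ?_ (norm_le_pi_norm (grad f (x t)) j)⟩
      rw [pi_norm_le_iff_of_nonneg (abs_nonneg _)]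
      intro i
      rw [← hj]
      exact Finset.le_sup' (fun i => |grad f (x t) i|) (Finset.mem_univ i)
    have hgpos : 0 < |grad f (x t) j| := by rw [← hj]; exact lt_of_lt_of_le (by positivity) hl
    rw [hform, neg_neg]
    refine le_trans ?_ (Finset.single_le_sum (fun i _ => hterm t i) (Finset.mem_univ j))
    calc (c * ‖x t - xs‖) ^ (2 * s) ≤ |grad f (x t) j| ^ (2 * s) := by
          rw [← hj]; exact Real.rpow_le_rpow (by positivity) hl (by positivity)
      _ = |grad f (x t) j| * |grad f (x t) j| ^ (1 / (p - 1)) := by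
          rw [← h2s, Real.rpow_add hgpos, Real.rpow_one]
      _ ≤ _ := by
          gcongr
          have : 0 ≤ |grad f (x t) j| ^ (1 / (q - 1)) := by positivity
          linarith
  have hneg : ∀ t, x t ≠ xs → ‖x t - xs‖ < δ → h' t < 0 := by
    intro t hne hlt
    have hpos : 0 < ‖x t - xs‖ := norm_pos_iff.2 (sub_ne_zero.2 hne)
    have := Real.rpow_pos_of_pos (mul_pos hc hpos) (2 * s)
    linarith [hbig t hne hlt]
  have hrate : ∀ t, x t ≠ xs → ‖x t - xs‖ < δ → a * |h t| ^ s ≤ |h' t| := by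
    intro t hne hlt
    have hpos : 0 < ‖x t - xs‖ := norm_pos_iff.2 (sub_ne_zero.2 hne)
    rw [abs_of_neg (hneg t hne hlt)]
    refine le_trans ?_ (hbig t hne hlt)
    have h1 : |h t| ^ s ≤ (C * ‖x t - xs‖ ^ 2) ^ s :=
      Real.rpow_le_rpow (abs_nonneg _) (hloc _ hlt).2 hs0.le
    have h2 : (C * ‖x t - xs‖ ^ 2) ^ s = C ^ s * ‖x t - xs‖ ^ (2 * s) := by
      rw [Real.mul_rpow hC.le (by positivity), Real.rpow_mul hpos.le]; norm_num
    calc a * |h t| ^ s ≤ a * (C ^ s * ‖x t - xs‖ ^ (2 * s)) := by rw [← h2]; gcongr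
      _ = (c * ‖x t - xs‖) ^ (2 * s) := by
        have := (Real.rpow_pos_of_pos hC s).ne'
        rw [Real.mul_rpow hc.le hpos.le, ha]; field_simp
  refine ⟨2 * (C ^ (1 - s) / ((1 - s) * a)), δ, ?_, hδ, ?_⟩
  · have := Real.rpow_pos_of_pos hC (1 - s); positivity
  intro r hr hrδ
  set S := {t : ℝ | 0 ≤ t ∧ Real.sqrt ((x t - xs) ⬝ᵥ (x t - xs)) < r ∧ x t ≠ xs} with hSdef
  have hSn : ∀ t ∈ S, ‖x t - xs‖ < r := fun t ht => (sup_le_sqrt _).trans_lt ht.2.1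
  have hSδ : ∀ t ∈ S, ‖x t - xs‖ < δ := fun t ht => (hSn t ht).trans hrδ
  have hS0 : S ⊆ Set.Ici 0 := fun t ht => ht.1
  have hycont : Continuous fun t => x (max t 0) := by
    have : ContinuousOn x (Set.Ici 0) := fun t ht =>
      (hx' t ht).continuousAt.continuousWithinAt
    exact this.comp_continuous (by fun_prop) (fun t => Set.mem_Ici.2 (le_max_right _ _))
  have hmeas : ∀ U : Set (Fin n → ℝ), IsOpen U → MeasurableSet {t : ℝ | 0 ≤ t ∧ x t ∈ U} := by
    intro U hU
    have : {t : ℝ | 0 ≤ t ∧ x t ∈ U} = Set.Ici 0 ∩ (fun t => x (max t 0)) ⁻¹' U := by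
      ext t
      simp only [Set.mem_setOf_eq, Set.mem_inter_iff, Set.mem_Ici, Set.mem_preimage]
      refine and_congr_right fun ht => ?_
      rw [max_eq_left ht]
    rw [this]
    exact measurableSet_Ici.inter (hU.preimage hycont).measurableSet
  have hfc : Continuous f := hf.continuous
  have hsq : Continuous fun y : Fin n → ℝ => Real.sqrt ((y - xs) ⬝ᵥ (y - xs)) := by
    simp only [dotProduct]; fun_prop
  have hUo : IsOpen {y : Fin n → ℝ | Real.sqrt ((y - xs) ⬝ᵥ (y - xs)) < r ∧ y ≠ xs} :=
    (isOpen_lt hsq continuous_const).inter isOpen_ne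
  have hSp : MeasurableSet (S ∩ {t | 0 < h t}) := by
    have := hmeas _ (hUo.inter (isOpen_lt continuous_const (hfc.sub continuous_const) :
      IsOpen {y | 0 < f y - f xs}))
    convert this using 1
    ext t; simp only [hSdef, hh, Set.mem_inter_iff, Set.mem_setOf_eq]; tauto
  have hSm : MeasurableSet (S ∩ {t | h t < 0}) := by
    have := hmeas _ (hUo.inter (isOpen_lt (hfc.sub continuous_const) continuous_const :
      IsOpen {y | f y - f xs < 0}))
    convert this using 1
    ext t; simp only [hSdef, hh, Set.mem_inter_iff, Set.mem_setOf_eq]; tauto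
  have hinj : Set.InjOn h S := injOn_of_antitone hS0 h h' hder hnonpos
    (fun t ht => hneg t ht.2.2 (hSδ t ht))
  have hMb : ∀ t ∈ S, |h t| ≤ C * r ^ 2 := by
    intro t ht
    refine (hloc _ (hSδ t ht)).2.trans ?_
    have := (hSn t ht).le
    gcongr
  have v1 : volume (S ∩ {t | 0 < h t}) ≤
      ENNReal.ofReal ((C * r ^ 2) ^ (1 - s) / ((1 - s) * a)) := by
    refine vol_le_of_deriv hSp h h' (fun t ht => hder t ht.1.1)
      (hinj.mono Set.inter_subset_left) _ a s ha0 hs1 (fun t ht => ht.2)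
      (fun t ht => (le_abs_self _).trans (hMb t ht.1)) (fun t ht => ?_)
    have := hrate t ht.1.2.2 (hSδ t ht.1)
    rwa [abs_of_pos (show 0 < h t from ht.2)] at this
  have v2 : volume (S ∩ {t | h t < 0}) ≤
      ENNReal.ofReal ((C * r ^ 2) ^ (1 - s) / ((1 - s) * a)) := by
    refine vol_le_of_deriv hSm (fun t => - h t) (fun t => - h' t)
      (fun t ht => (hder t ht.1.1).neg)
      (fun t ht t' ht' he => hinj ht.1 ht'.1 (neg_injective he)) _ a s ha0 hs1
      (fun t ht => neg_pos.2 ht.2)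
      (fun t ht => (neg_le_abs _).trans (hMb t ht.1)) (fun t ht => ?_)
    have := hrate t ht.1.2.2 (hSδ t ht.1)
    rw [abs_of_neg (show h t < 0 from ht.2)] at this
    rwa [abs_neg]
  have v0 : volume (S ∩ {t | h t = 0}) = 0 := by
    apply Set.Subsingleton.measure_zero
    intro t ht t' ht'
    exact hinj ht.1 ht'.1 (by rw [show h t = 0 from ht.2, show h t' = 0 from ht'.2])
  have hcov : S ⊆ (S ∩ {t | 0 < h t}) ∪ (S ∩ {t | h t < 0}) ∪ (S ∩ {t | h t = 0}) := by
    intro t ht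
    rcases lt_trichotomy (h t) 0 with hl | hl | hl
    · exact Or.inl (Or.inr ⟨ht, hl⟩)
    · exact Or.inr ⟨ht, hl⟩
    · exact Or.inl (Or.inl ⟨ht, hl⟩)
  have hnn : 0 ≤ (C * r ^ 2) ^ (1 - s) / ((1 - s) * a) := by positivity
  calc volume S ≤ volume (S ∩ {t | 0 < h t}) + volume (S ∩ {t | h t < 0})
        + volume (S ∩ {t | h t = 0}) :=
        (measure_mono hcov).trans ((measure_union_le _ _).trans
          (add_le_add (measure_union_le _ _) le_rfl))
    _ ≤ ENNReal.ofReal ((C * r ^ 2) ^ (1 - s) / ((1 - s) * a)) +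
        ENNReal.ofReal ((C * r ^ 2) ^ (1 - s) / ((1 - s) * a)) := by
        rw [v0, add_zero]; exact add_le_add v1 v2
    _ = _ := by
        rw [← ENNReal.ofReal_add hnn hnn, h2s', Real.mul_rpow hC.le (by positivity),
          Real.rpow_mul hr.le]
        congr 1
        norm_num
        ring

/-- **Fast evasion of saddle points (Theorem 3).** Let `x*` be a non-degenerate saddle
point of a `C²` function `f`, with `Λ_max`, `Λ_min` the extreme absolute eigenvalues of
the Hessian `H = D²f(x*)`. Then along any GenFlow solution not converging to `x*`,
there are constants `k₁ > 1/2`, `k₂ ∈ (0,1)` such that for all sufficiently small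
`r > 0`, the Lebesgue measure of the set of times spent in `B_r(x*) \ {x*}` is at most
`min{ n^{1/(p-1)} (8k₁/k₂^{p/(p-1)}) Λmax^{(p-2)/(2(p-1))}/Λmin^{p/(2(p-1))} r^{(p-2)/(p-1)},`
`     n^{1/(q-1)} (8k₁/k₂^{q/(q-1)}) Λmax^{(q-2)/(2(q-1))}/Λmin^{q/(2(q-1))} r^{(q-2)/(q-1)} }`. -/
theorem genFlow_fast_saddle_evasion
    {n : ℕ} (f : (Fin n → ℝ) → ℝ) (hf : ContDiff ℝ 2 f)
    (xstar : Fin n → ℝ)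
    (hcrit : fderiv ℝ f xstar = 0)
    (hH : (hess f xstar).IsHermitian)
    (hnd : IsUnit (hess f xstar).det)
    (Λmax Λmin : ℝ)
    (hmax : IsGreatest (Set.range fun i => |hH.eigenvalues i|) Λmax)
    (hmin : IsLeast (Set.range fun i => |hH.eigenvalues i|) Λmin)
    (p q : ℝ) (hp : 2 < p) (hq : q ∈ Set.Ioo (1 : ℝ) 2)
    (x : ℝ → (Fin n → ℝ))
    (hx : ∀ t : ℝ, 0 ≤ t → ∀ i, HasDerivAt (fun s => x s i)
      (-(Real.sign (grad f (x t) i) *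
          (|grad f (x t) i| ^ (1 / (p - 1)) + |grad f (x t) i| ^ (1 / (q - 1))))) t)
    (hnoconv : ¬ Filter.Tendsto x Filter.atTop (nhds xstar)) :
    ∃ k₁ k₂ : ℝ, 1 / 2 < k₁ ∧ 0 < k₂ ∧ k₂ < 1 ∧
      ∃ r₀ : ℝ, 0 < r₀ ∧ ∀ r : ℝ, 0 < r → r < r₀ →
        volume {t : ℝ | 0 ≤ t ∧
            Real.sqrt ((x t - xstar) ⬝ᵥ (x t - xstar)) < r ∧ x t ≠ xstar} ≤
          ENNReal.ofReal (min
            ((n : ℝ) ^ (1 / (p - 1)) * (8 * k₁ / k₂ ^ (p / (p - 1))) *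
              (Λmax ^ ((p - 2) / (2 * (p - 1))) / Λmin ^ (p / (2 * (p - 1)))) *
              r ^ ((p - 2) / (p - 1)))
            ((n : ℝ) ^ (1 / (q - 1)) * (8 * k₁ / k₂ ^ (q / (q - 1))) *
              (Λmax ^ ((q - 2) / (2 * (q - 1))) / Λmin ^ (q / (2 * (q - 1)))) *
              r ^ ((q - 2) / (q - 1)))) := by
  obtain ⟨i0, hi0⟩ := hmin.1
  obtain ⟨i1, hi1⟩ := hmax.1
  have hn : 0 < n := i0.pos
  have hΛ : 0 < Λmin := by
    rw [← hi0]
    refine abs_pos.2 fun h0 => hnd.ne_zero ?_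
    rw [hH.det_eq_prod_eigenvalues]
    exact Finset.prod_eq_zero (Finset.mem_univ i0) (by simpa using h0)
  have hΛ' : 0 < Λmax := hΛ.trans_le (hmin.2 hmax.1)
  have hnr : (0:ℝ) < n := by exact_mod_cast hn
  obtain ⟨K, r₀, hK, hr₀, hb⟩ := time_bound f hf xstar hcrit hnd hn p q hp x hx
  obtain ⟨hq1, hq2⟩ := hq
  have hpow : ∀ m : ℝ, ∃ D : ℝ, 0 < D ∧ ∀ k : ℝ,
      (n : ℝ) ^ (1 / (m - 1)) * (8 * k / (1 / 2 : ℝ) ^ (m / (m - 1))) *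
              (Λmax ^ ((m - 2) / (2 * (m - 1))) / Λmin ^ (m / (2 * (m - 1)))) = D * k := by
    intro m
    refine ⟨(n : ℝ) ^ (1 / (m - 1)) * (8 / (1 / 2 : ℝ) ^ (m / (m - 1))) *
              (Λmax ^ ((m - 2) / (2 * (m - 1))) / Λmin ^ (m / (2 * (m - 1)))), ?_, ?_⟩
    · positivity
    · intro k; ring
  obtain ⟨D₁, hD₁, hk₁⟩ := hpow p
  obtain ⟨D₂, hD₂, hk₂⟩ := hpow q
  have hA : 0 < K / D₁ := by positivity
  have hB : 0 < K / D₂ := by positivity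
  refine ⟨1 + K / D₁ + K / D₂, 1 / 2, by linarith, by norm_num, by norm_num,
    min r₀ 1, lt_min hr₀ one_pos, fun r hr hlt => ?_⟩
  refine (hb r hr (hlt.trans_le (min_le_left _ _))).trans (ENNReal.ofReal_le_ofReal ?_)
  rw [hk₁, hk₂]
  have hr1 : r ≤ 1 := (hlt.trans_le (min_le_right _ _)).le
  have e1 : K ≤ D₁ * (1 + K / D₁ + K / D₂) := by
    have : D₁ * (K / D₁) = K := by field_simp
    nlinarith [mul_pos hD₁ hB]
  have e2 : K ≤ D₂ * (1 + K / D₁ + K / D₂) := by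
    have : D₂ * (K / D₂) = K := by field_simp
    nlinarith [mul_pos hD₂ hA]
  refine le_min (mul_le_mul_of_nonneg_right e1 (by positivity)) ?_
  have f1 : r ^ ((p - 2) / (p - 1)) ≤ 1 :=
    Real.rpow_le_one hr.le hr1 (div_nonneg (by linarith) (by linarith))
  have f2 : 1 ≤ r ^ ((q - 2) / (q - 1)) :=
    Real.one_le_rpow_of_pos_of_le_one_of_nonpos hr hr1
      (div_nonpos_of_nonpos_of_nonneg (by linarith) (by linarith))
  exact mul_le_mul e2 (f1.trans f2) (by positivity) (by positivity)
end

section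
/- Let g : ℝⁿ × ℝᵐ → ℝ be twice continuously differentiable with ∇²ₓₓ g(x,y) ⪰ μ₁ I_n and ∇²ᵧᵧ g(x,y) ⪯ −μ₂ I_m for all (x,y), where μ₁, μ₂ > 0, and let (x*, y*) be the unique point with ∇g(x*, y*) = 0. Fix p > 2, q ∈ (1,2), and define ∇G(x,y) = (∇ₓg(x,y), −∇ᵧg(x,y)) ∈ ℝⁿ⁺ᵐ. Let (x, y) : [0,∞) → ℝⁿ × ℝᵐ be a differentiable trajectory such that at every t with ∇G(x(t),y(t)) ≠ 0, ẋ(t) = −∇ₓg(x(t),y(t)) · ( ‖∇G(x(t),y(t))‖^{−(p−2)/(p−1)} + ‖∇G(x(t),y(t))‖^{−(q−2)/(q−1)} ) and ẏ(t) = ∇ᵧg(x(t),y(t)) · ( ‖∇G(x(t),y(t))‖^{−(p−2)/(p−1)} + ‖∇G(x(t),y(t))‖^{−(q−2)/(q−1)} ), and ẋ(t) = 0, ẏ(t) = 0 whenever ∇G(x(t),y(t)) = 0. Then (x(t), y(t)) = (x*, y*) for all t ≥ T̄, where T̄ = 1/(a(1−γ₁)) + 1/(b(γ₂−1)) with γ₁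 = p/(2(p−1)), γ₂ = q/(2(q−1)), a = min(μ₁,μ₂)·2^{γ₁}, and b = min(μ₁,μ₂)·2^{γ₂}. -/
/-- Partial gradient of `g(x,y)` in `x`. -/
noncomputable def gradx {n m : ℕ} (g : (Fin n → ℝ) → (Fin m → ℝ) → ℝ)
    (x : Fin n → ℝ) (y : Fin m → ℝ) : Fin n → ℝ :=
  fun i => fderiv ℝ (fun x' => g x' y) x (Pi.single i 1)

/-- Partial gradient of `g(x,y)` in `y`. -/
noncomputable def grady {n m : ℕ} (g : (Fin n → ℝ) → (Fin m → ℝ) → ℝ)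
    (x : Fin n → ℝ) (y : Fin m → ℝ) : Fin m → ℝ :=
  fun j => fderiv ℝ (fun y' => g x y') y (Pi.single j 1)

/-- The Hessian block `∇²ₓₓ g(x,y)`. -/
noncomputable def hessxx {n m : ℕ} (g : (Fin n → ℝ) → (Fin m → ℝ) → ℝ)
    (x : Fin n → ℝ) (y : Fin m → ℝ) : Matrix (Fin n) (Fin n) ℝ :=
  Matrix.of fun i j => fderiv ℝ (fun x' => gradx g x' y j) x (Pi.single i 1)

/-- The Hessian block `∇²ᵧᵧ g(x,y)`. -/
noncomputable def hessyy {n m : ℕ} (g : (Fin n → ℝ) → (Fin m → ℝ) → ℝ)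
    (x : Fin n → ℝ) (y : Fin m → ℝ) : Matrix (Fin m) (Fin m) ℝ :=
  Matrix.of fun i j => fderiv ℝ (fun y' => grady g x y' j) y (Pi.single i 1)

/-- `‖∇G(x,y)‖` where `∇G = (∇ₓg, -∇ᵧg)`. -/
noncomputable def normG {n m : ℕ} (g : (Fin n → ℝ) → (Fin m → ℝ) → ℝ)
    (x : Fin n → ℝ) (y : Fin m → ℝ) : ℝ :=
  Real.sqrt (∑ i, gradx g x y i ^ 2 + ∑ j, grady g x y j ^ 2)

/-- Scalar fixed-time lemma. -/
lemma fixed_time_aux (V V' : ℝ → ℝ) (a b γ₁ γ₂ : ℝ) (ha : 0 < a) (hb : 0 < b)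
    (h1 : γ₁ < 1) (h2 : 1 < γ₂) (hV0 : ∀ t, 0 ≤ V t)
    (hd : ∀ t, 0 ≤ t → HasDerivAt V (V' t) t)
    (hle : ∀ t, 0 ≤ t → V' t ≤ 0)
    (hineq : ∀ t, 0 ≤ t → 0 < V t → V' t ≤ -(a * V t ^ γ₁ + b * V t ^ γ₂))
    (t : ℝ) (ht : 1 / (a * (1 - γ₁)) + 1 / (b * (γ₂ - 1)) ≤ t) : V t = 0 := by
  by_contra hne
  have hpos : 0 < V t := lt_of_le_of_ne (hV0 t) (Ne.symm hne)
  have h1' : 0 < 1 - γ₁ := by linarith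
  have h2' : 0 < γ₂ - 1 := by linarith
  have hT1 : 0 < 1 / (a * (1 - γ₁)) := by positivity
  have hT2 : 0 < 1 / (b * (γ₂ - 1)) := by positivity
  set T1 := 1 / (a * (1 - γ₁)) with hT1d
  set T2 := 1 / (b * (γ₂ - 1)) with hT2d
  have ht0 : 0 ≤ t := by linarith
  have hanti : AntitoneOn V (Set.Ici 0) := by
    apply antitoneOn_of_hasDerivWithinAt_nonpos (f' := V') (convex_Ici 0)
    · exact fun s hs => (hd s hs).continuousAt.continuousWithinAt
    · intro s hs
      rw [interior_Ici] at hs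
      exact (hd s (le_of_lt hs)).hasDerivWithinAt
    · intro s hs
      rw [interior_Ici] at hs
      exact hle s (le_of_lt hs)
  have hVpos : ∀ s ∈ Set.Icc 0 t, 0 < V s := fun s hs =>
    lt_of_lt_of_le hpos (hanti hs.1 ht0 hs.2)
  have key : ∀ (γ : ℝ), ∀ s ∈ Set.Icc 0 t,
      HasDerivAt (fun s => V s ^ (1 - γ)) (V' s * (1 - γ) * V s ^ (-γ)) s := by
    intro γ s hs
    have := (hd s hs.1).rpow_const (p := 1 - γ) (Or.inl (hVpos s hs).ne')
    convert this using 2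
    ring_nf
  -- first phase
  have hB : MonotoneOn (fun s => V s ^ (1 - γ₂) - b * (γ₂ - 1) * s) (Set.Icc 0 t) := by
    have hdd : ∀ s ∈ Set.Icc 0 t, HasDerivAt (fun s => V s ^ (1 - γ₂) - b * (γ₂ - 1) * s)
        (V' s * (1 - γ₂) * V s ^ (-γ₂) - b * (γ₂ - 1)) s := by
      intro s hs
      have := (key γ₂ s hs).fun_sub ((hasDerivAt_id s).const_mul (b * (γ₂ - 1)))
      simpa using this
    apply monotoneOn_of_hasDerivWithinAt_nonneg (convex_Icc 0 t)
      (f' := fun s => V' s * (1 - γ₂) * V s ^ (-γ₂) - b * (γ₂ - 1))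
    · exact fun s hs => (hdd s hs).continuousAt.continuousWithinAt
    · exact fun s hs => (hdd s (interior_subset hs)).hasDerivWithinAt
    · intro s hs
      have hs := interior_subset hs
      have hv := hVpos s hs
      have hi := hineq s hs.1 hv
      have e : V s ^ γ₂ * V s ^ (-γ₂) = 1 := by
        rw [← Real.rpow_add hv]; simp
      have p1 : 0 < V s ^ γ₁ := Real.rpow_pos_of_pos hv _
      have p2 : 0 < V s ^ (-γ₂) := Real.rpow_pos_of_pos hv _
      have hi2 : b * V s ^ γ₂ ≤ - V' s := by nlinarith [mul_pos ha p1]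
      have := mul_le_mul_of_nonneg_right hi2 (mul_pos h2' p2).le
      have e3 : b * V s ^ γ₂ * ((γ₂ - 1) * V s ^ (-γ₂)) = b * (γ₂ - 1) := by
        linear_combination b * (γ₂ - 1) * e
      linarith
  have hA : AntitoneOn (fun s => V s ^ (1 - γ₁) + a * (1 - γ₁) * s) (Set.Icc 0 t) := by
    have hdd : ∀ s ∈ Set.Icc 0 t, HasDerivAt (fun s => V s ^ (1 - γ₁) + a * (1 - γ₁) * s)
        (V' s * (1 - γ₁) * V s ^ (-γ₁) + a * (1 - γ₁)) s := by
      intro s hs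
      have := (key γ₁ s hs).fun_add ((hasDerivAt_id s).const_mul (a * (1 - γ₁)))
      simpa using this
    apply antitoneOn_of_hasDerivWithinAt_nonpos (convex_Icc 0 t)
      (f' := fun s => V' s * (1 - γ₁) * V s ^ (-γ₁) + a * (1 - γ₁))
    · exact fun s hs => (hdd s hs).continuousAt.continuousWithinAt
    · exact fun s hs => (hdd s (interior_subset hs)).hasDerivWithinAt
    · intro s hs
      have hs := interior_subset hs
      have hv := hVpos s hs
      have hi := hineq s hs.1 hv
      have e : V s ^ γ₁ * V s ^ (-γ₁) = 1 := by
        rw [← Real.rpow_add hv]; simp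
      have p1 : 0 < V s ^ γ₂ := Real.rpow_pos_of_pos hv _
      have p2 : 0 < V s ^ (-γ₁) := Real.rpow_pos_of_pos hv _
      have hi2 : a * V s ^ γ₁ ≤ - V' s := by nlinarith [mul_pos hb p1]
      have := mul_le_mul_of_nonneg_right hi2 (mul_pos h1' p2).le
      have e3 : a * V s ^ γ₁ * ((1 - γ₁) * V s ^ (-γ₁)) = a * (1 - γ₁) := by
        linear_combination a * (1 - γ₁) * e
      linarith
  have m0 : (0 : ℝ) ∈ Set.Icc 0 t := ⟨le_rfl, ht0⟩
  have m2 : T2 ∈ Set.Icc 0 t := ⟨hT2.le, by linarith⟩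
  have mt : t ∈ Set.Icc 0 t := ⟨ht0, le_rfl⟩
  have hB' := hB m0 m2 m2.1
  have hA' := hA m2 mt m2.2
  simp only at hA' hB'
  have e2 : b * (γ₂ - 1) * T2 = 1 := by rw [hT2d]; field_simp
  have e1 : a * (1 - γ₁) * T1 = 1 := by rw [hT1d]; field_simp
  have hp0 : 0 < V 0 ^ (1 - γ₂) := Real.rpow_pos_of_pos (hVpos 0 m0) _
  have hpt : 0 < V t ^ (1 - γ₁) := Real.rpow_pos_of_pos hpos _
  have hgt : 1 < V T2 ^ (1 - γ₂) := by rw [e2] at hB'; linarith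
  have hlt : V T2 < 1 := by
    by_contra hcon
    push Not at hcon
    have := Real.rpow_le_one_of_one_le_of_nonpos hcon (by linarith : 1 - γ₂ ≤ 0)
    linarith
  have hlt2 : V T2 ^ (1 - γ₁) < 1 := Real.rpow_lt_one (hV0 _) hlt h1'
  have : a * (1 - γ₁) * (T1 + T2) ≤ a * (1 - γ₁) * t :=
    mul_le_mul_of_nonneg_left ht (by positivity)
  nlinarith

section saddle_helpers

variable {n m : ℕ} (g : (Fin n → ℝ) → (Fin m → ℝ) → ℝ)

/-- The uncurried function. -/
noncomputable def uncF (z : (Fin n → ℝ) × (Fin m → ℝ)) : ℝ := g z.1 z.2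

lemma gradx_eq (hg : ContDiff ℝ 2 (uncF g)) (x : Fin n → ℝ) (y : Fin m → ℝ) (i : Fin n) :
    gradx g x y i = fderiv ℝ (uncF g) (x, y) (Pi.single i 1, 0) := by
  have hF : HasFDerivAt (uncF g) (fderiv ℝ (uncF g) (x, y)) (x, y) :=
    (hg.differentiable (by norm_num) (x, y)).hasFDerivAt
  have h := hF.comp x (hasFDerivAt_prodMk_left (𝕜 := ℝ) x y)
  have h' : fderiv ℝ (fun x' => g x' y) x = _ := h.fderiv
  simp [gradx, h']

lemma grady_eq (hg : ContDiff ℝ 2 (uncF g)) (x : Fin n → ℝ) (y : Fin m → ℝ) (i : Fin m) :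
    grady g x y i = fderiv ℝ (uncF g) (x, y) (0, Pi.single i 1) := by
  have hF : HasFDerivAt (uncF g) (fderiv ℝ (uncF g) (x, y)) (x, y) :=
    (hg.differentiable (by norm_num) (x, y)).hasFDerivAt
  have h := hF.comp y (hasFDerivAt_prodMk_right (𝕜 := ℝ) x y)
  have h' : fderiv ℝ (fun y' => g x y') y = _ := h.fderiv
  simp [grady, h']

lemma hasFDerivAt_fderiv_uncF (hg : ContDiff ℝ 2 (uncF g)) (z : (Fin n → ℝ) × (Fin m → ℝ)) :
    HasFDerivAt (fderiv ℝ (uncF g)) (fderiv ℝ (fderiv ℝ (uncF g)) z) z := by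
  have : ContDiff ℝ 1 (fderiv ℝ (uncF g)) := hg.fderiv_right (by norm_num)
  exact (this.differentiable (by norm_num) z).hasFDerivAt

lemma hessxx_eq (hg : ContDiff ℝ 2 (uncF g)) (x : Fin n → ℝ) (y : Fin m → ℝ) (i j : Fin n) :
    hessxx g x y i j =
      fderiv ℝ (fderiv ℝ (uncF g)) (x, y) (Pi.single i 1, 0) (Pi.single j 1, 0) := by
  have h := ((hasFDerivAt_fderiv_uncF g hg (x, y)).comp x
    (hasFDerivAt_prodMk_left (𝕜 := ℝ) x y)).clm_apply
      (hasFDerivAt_const ((Pi.single j 1, 0) : (Fin n → ℝ) × (Fin m → ℝ)) x)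
  have e : (fun x' => gradx g x' y j) =
      fun x' => fderiv ℝ (uncF g) (x', y) (Pi.single j 1, 0) :=
    funext fun x' => gradx_eq g hg x' y j
  have h' : fderiv ℝ (fun x' => fderiv ℝ (uncF g) (x', y) (Pi.single j 1, 0)) x = _ := h.fderiv
  simp [hessxx, e, h']

lemma hessyy_eq (hg : ContDiff ℝ 2 (uncF g)) (x : Fin n → ℝ) (y : Fin m → ℝ) (i j : Fin m) :
    hessyy g x y i j =
      fderiv ℝ (fderiv ℝ (uncF g)) (x, y) (0, Pi.single i 1) (0, Pi.single j 1) := by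
  have h := ((hasFDerivAt_fderiv_uncF g hg (x, y)).comp y
    (hasFDerivAt_prodMk_right (𝕜 := ℝ) x y)).clm_apply
      (hasFDerivAt_const ((0, Pi.single j 1) : (Fin n → ℝ) × (Fin m → ℝ)) y)
  have e : (fun y' => grady g x y' j) =
      fun y' => fderiv ℝ (uncF g) (x, y') (0, Pi.single j 1) :=
    funext fun y' => grady_eq g hg x y' j
  have h' : fderiv ℝ (fun y' => fderiv ℝ (uncF g) (x, y') (0, Pi.single j 1)) y = _ := h.fderiv
  simp [hessyy, e, h']

lemma vec_sum_left (u : Fin n → ℝ) :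
    ((u, 0) : (Fin n → ℝ) × (Fin m → ℝ)) = ∑ i, u i • (Pi.single i 1, 0) := by
  ext k
  · simp [Prod.fst_sum, Finset.sum_apply, Pi.single_apply]
  · simp [Prod.snd_sum]

lemma vec_sum_right (u : Fin m → ℝ) :
    ((0, u) : (Fin n → ℝ) × (Fin m → ℝ)) = ∑ i, u i • (0, Pi.single i 1) := by
  ext k
  · simp [Prod.fst_sum]
  · simp [Prod.snd_sum, Finset.sum_apply, Pi.single_apply]

lemma quad_x (hg : ContDiff ℝ 2 (uncF g)) (x : Fin n → ℝ) (y : Fin m → ℝ) (u : Fin n → ℝ) :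
    ∑ i, ∑ j, u i * hessxx g x y i j * u j =
      fderiv ℝ (fderiv ℝ (uncF g)) (x, y) (u, 0) (u, 0) := by
  rw [vec_sum_left u]
  simp only [map_sum, map_smul, _root_.sum_apply, _root_.smul_apply,
    smul_eq_mul, hessxx_eq g hg, Finset.mul_sum]
  rw [Finset.sum_comm]
  refine Finset.sum_congr rfl fun i _ => Finset.sum_congr rfl fun j _ => ?_
  ring

lemma quad_y (hg : ContDiff ℝ 2 (uncF g)) (x : Fin n → ℝ) (y : Fin m → ℝ) (u : Fin m → ℝ) :
    ∑ i, ∑ j, u i * hessyy g x y i j * u j =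
      fderiv ℝ (fderiv ℝ (uncF g)) (x, y) (0, u) (0, u) := by
  rw [vec_sum_right u]
  simp only [map_sum, map_smul, _root_.sum_apply, _root_.smul_apply,
    smul_eq_mul, hessyy_eq g hg, Finset.mul_sum]
  rw [Finset.sum_comm]
  refine Finset.sum_congr rfl fun i _ => Finset.sum_congr rfl fun j _ => ?_
  ring

/-- The Lyapunov function. -/
noncomputable def lyapV (x : Fin n → ℝ) (y : Fin m → ℝ) : ℝ :=
  (1 / 2) * (∑ i, gradx g x y i ^ 2 + ∑ j, grady g x y j ^ 2)

lemma lyap_deriv (hg : ContDiff ℝ 2 (uncF g)) (x : ℝ → (Fin n → ℝ)) (y : ℝ → (Fin m → ℝ))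
    (t : ℝ) (x' : Fin n → ℝ) (y' : Fin m → ℝ)
    (hx : ∀ i, HasDerivAt (fun s => x s i) (x' i) t)
    (hy : ∀ i, HasDerivAt (fun s => y s i) (y' i) t) :
    HasDerivAt (fun s => lyapV g (x s) (y s))
      (fderiv ℝ (fderiv ℝ (uncF g)) (x t, y t) (x', y')
        (gradx g (x t) (y t), grady g (x t) (y t))) t := by
  have hz : HasDerivAt (fun s => (x s, y s)) (x', y') t :=
    (hasDerivAt_pi.2 hx).prodMk (hasDerivAt_pi.2 hy)
  have hD : HasDerivAt (fun s => fderiv ℝ (uncF g) (x s, y s))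
      (fderiv ℝ (fderiv ℝ (uncF g)) (x t, y t) (x', y')) t :=
    (hasFDerivAt_fderiv_uncF g hg (x t, y t)).comp_hasDerivAt t hz
  have hgx : ∀ i, HasDerivAt (fun s => gradx g (x s) (y s) i)
      (fderiv ℝ (fderiv ℝ (uncF g)) (x t, y t) (x', y') (Pi.single i 1, 0)) t := by
    intro i
    simp only [gradx_eq g hg]
    simpa using hD.clm_apply
      (hasDerivAt_const t ((Pi.single i 1, 0) : (Fin n → ℝ) × (Fin m → ℝ)))
  have hgy : ∀ i, HasDerivAt (fun s => grady g (x s) (y s) i)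
      (fderiv ℝ (fderiv ℝ (uncF g)) (x t, y t) (x', y') (0, Pi.single i 1)) t := by
    intro i
    simp only [grady_eq g hg]
    simpa using hD.clm_apply
      (hasDerivAt_const t ((0, Pi.single i 1) : (Fin n → ℝ) × (Fin m → ℝ)))
  have hsum := ((HasDerivAt.fun_sum (u := Finset.univ) fun i _ => (hgx i).fun_pow 2).fun_add
    (HasDerivAt.fun_sum (u := Finset.univ) fun i _ => (hgy i).fun_pow 2)).const_mul (1 / 2 : ℝ)
  have split : ((gradx g (x t) (y t), grady g (x t) (y t)) : (Fin n → ℝ) × (Fin m → ℝ)) =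
      (gradx g (x t) (y t), 0) + (0, grady g (x t) (y t)) := by simp
  rw [split, map_add, vec_sum_left, vec_sum_right]
  simp only [map_sum, map_smul, smul_eq_mul]
  refine hsum.congr_deriv ?_
  rw [mul_add, Finset.mul_sum, Finset.mul_sum]
  congr 1 <;> refine Finset.sum_congr rfl fun i _ => ?_ <;> norm_num <;> ring

lemma quad_bound (hg : ContDiff ℝ 2 (uncF g))
    (μ₁ μ₂ : ℝ)
    (hxx : ∀ x y (u : Fin n → ℝ),
      μ₁ * ∑ i, u i ^ 2 ≤ ∑ i, ∑ j, u i * hessxx g x y i j * u j)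
    (hyy : ∀ x y (w : Fin m → ℝ),
      ∑ i, ∑ j, w i * hessyy g x y i j * w j ≤ -μ₂ * ∑ j, w j ^ 2)
    (x : Fin n → ℝ) (y : Fin m → ℝ) (u : Fin n → ℝ) (w : Fin m → ℝ) (s : ℝ) (hs : 0 ≤ s) :
    fderiv ℝ (fderiv ℝ (uncF g)) (x, y) (fun i => -u i * s, fun j => w j * s) (u, w) ≤
      - (s * (min μ₁ μ₂ * (∑ i, u i ^ 2 + ∑ j, w j ^ 2))) := by
  have e1 : ((fun i => -u i * s, fun j => w j * s) : (Fin n → ℝ) × (Fin m → ℝ)) =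
      s • (-(u, 0) + (0, w)) := by
    ext k <;> simp [mul_comm]
  have e2 : ((u, w) : (Fin n → ℝ) × (Fin m → ℝ)) = (u, 0) + (0, w) := by simp
  have hsymm : IsSymmSndFDerivAt ℝ (uncF g) (x, y) :=
    hg.contDiffAt.isSymmSndFDerivAt (by simp)
  have hc := hsymm (u, 0) (0, w)
  have h1 := hxx x y u
  have h2 := hyy x y w
  rw [quad_x g hg] at h1
  rw [quad_y g hg] at h2
  rw [e1, e2]
  simp only [map_smul, map_add, map_neg, _root_.add_apply,
    _root_.smul_apply, _root_.neg_apply, smul_eq_mul]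
  rw [← mul_neg, ← mul_add]
  apply mul_le_mul_of_nonneg_left _ hs
  have p1 : 0 ≤ ∑ i, u i ^ 2 := Finset.sum_nonneg fun i _ => sq_nonneg _
  have p2 : 0 ≤ ∑ i, w i ^ 2 := Finset.sum_nonneg fun i _ => sq_nonneg _
  have m1 := mul_le_mul_of_nonneg_right (min_le_left μ₁ μ₂) p1
  have m2 := mul_le_mul_of_nonneg_right (min_le_right μ₁ μ₂) p2
  linarith

end saddle_helpers

/-- **Fixed-time convergence to the saddle point of a minimax problem (Theorem 4).**
For a `C²`, strongly convex-strongly concave function `g` with unique stationary point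
`(x*, y*)`, the normalized saddle-point dynamics reaches `(x*, y*)` by time
`T̄ = 1/(a(1-γ₁)) + 1/(b(γ₂-1))` with `γ₁ = p/(2(p-1))`, `γ₂ = q/(2(q-1))`,
`a = min(μ₁,μ₂) 2^{γ₁}`, `b = min(μ₁,μ₂) 2^{γ₂}`. -/
theorem saddle_point_dynamics_fixed_time_convergence
    {n m : ℕ} (g : (Fin n → ℝ) → (Fin m → ℝ) → ℝ)
    (hg : ContDiff ℝ 2 (fun z : (Fin n → ℝ) × (Fin m → ℝ) => g z.1 z.2))
    (μ₁ μ₂ : ℝ) (hμ₁ : 0 < μ₁) (hμ₂ : 0 < μ₂)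
    (hxx : ∀ x y (u : Fin n → ℝ),
      μ₁ * ∑ i, u i ^ 2 ≤ ∑ i, ∑ j, u i * hessxx g x y i j * u j)
    (hyy : ∀ x y (w : Fin m → ℝ),
      ∑ i, ∑ j, w i * hessyy g x y i j * w j ≤ -μ₂ * ∑ j, w j ^ 2)
    (xstar : Fin n → ℝ) (ystar : Fin m → ℝ)
    (hstat : gradx g xstar ystar = 0 ∧ grady g xstar ystar = 0)
    (huniq : ∀ x' y', gradx g x' y' = 0 → grady g x' y' = 0 →
      x' = xstar ∧ y' = ystar)
    (p q : ℝ) (hp : 2 < p) (hq : q ∈ Set.Ioo (1 : ℝ) 2)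
    (x : ℝ → (Fin n → ℝ)) (y : ℝ → (Fin m → ℝ))
    (hdyn : ∀ t : ℝ, 0 ≤ t →
      ¬(gradx g (x t) (y t) = 0 ∧ grady g (x t) (y t) = 0) →
      (∀ i, HasDerivAt (fun s => x s i)
        (-gradx g (x t) (y t) i *
          (normG g (x t) (y t) ^ (-((p - 2) / (p - 1))) +
            normG g (x t) (y t) ^ (-((q - 2) / (q - 1))))) t) ∧
      (∀ j, HasDerivAt (fun s => y s j)
        (grady g (x t) (y t) j *
          (normG g (x t) (y t) ^ (-((p - 2) / (p - 1))) +
            normG g (x t) (y t) ^ (-((q - 2) / (q - 1))))) t))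
    (hdyn0 : ∀ t : ℝ, 0 ≤ t →
      (gradx g (x t) (y t) = 0 ∧ grady g (x t) (y t) = 0) →
      (∀ i, HasDerivAt (fun s => x s i) 0 t) ∧
      (∀ j, HasDerivAt (fun s => y s j) 0 t)) :
    ∀ t : ℝ,
      1 / (min μ₁ μ₂ * 2 ^ (p / (2 * (p - 1))) * (1 - p / (2 * (p - 1)))) +
        1 / (min μ₁ μ₂ * 2 ^ (q / (2 * (q - 1))) * (q / (2 * (q - 1)) - 1)) ≤ t →
      x t = xstar ∧ y t = ystar := by
  obtain ⟨hq1, hq2⟩ := hq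
  have hg' : ContDiff ℝ 2 (uncF g) := hg
  have hμ : 0 < min μ₁ μ₂ := lt_min hμ₁ hμ₂
  set sc : ℝ → ℝ := fun t => normG g (x t) (y t) ^ (-((p - 2) / (p - 1))) +
            normG g (x t) (y t) ^ (-((q - 2) / (q - 1))) with hsc
  have hN0 : ∀ t, 0 ≤ normG g (x t) (y t) := fun t => Real.sqrt_nonneg _
  have hsc0 : ∀ t, 0 ≤ sc t := fun t =>
    add_nonneg (Real.rpow_nonneg (hN0 t) _) (Real.rpow_nonneg (hN0 t) _)
  have hder : ∀ t, 0 ≤ t →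
      (∀ i, HasDerivAt (fun s => x s i) (-gradx g (x t) (y t) i * sc t) t) ∧
      (∀ j, HasDerivAt (fun s => y s j) (grady g (x t) (y t) j * sc t) t) := by
    intro t ht
    by_cases h : gradx g (x t) (y t) = 0 ∧ grady g (x t) (y t) = 0
    · have := hdyn0 t ht h
      simpa [h.1, h.2] using this
    · exact hdyn t ht h
  have hVd : ∀ t, 0 ≤ t → HasDerivAt (fun s => lyapV g (x s) (y s)) _ t := fun t ht =>
    lyap_deriv g hg' x y t (fun i => -gradx g (x t) (y t) i * sc t)
      (fun j => grady g (x t) (y t) j * sc t) (hder t ht).1 (hder t ht).2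
  have hS0 : ∀ t, 0 ≤ ∑ i, gradx g (x t) (y t) i ^ 2 + ∑ j, grady g (x t) (y t) j ^ 2 :=
    fun t => add_nonneg (Finset.sum_nonneg fun i _ => sq_nonneg _)
      (Finset.sum_nonneg fun i _ => sq_nonneg _)
  have hqb := fun t => quad_bound g hg' μ₁ μ₂ hxx hyy (x t) (y t)
    (gradx g (x t) (y t)) (grady g (x t) (y t)) (sc t) (hsc0 t)
  have hp1 : 0 < p - 1 := by linarith
  have hq1' : 0 < q - 1 := by linarith
  intro t ht
  have hV := fixed_time_aux (fun s => lyapV g (x s) (y s)) _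
    (min μ₁ μ₂ * 2 ^ (p / (2 * (p - 1)))) (min μ₁ μ₂ * 2 ^ (q / (2 * (q - 1))))
    (p / (2 * (p - 1))) (q / (2 * (q - 1)))
    (by positivity) (by positivity)
    (by rw [div_lt_one (by positivity)]; linarith)
    (by rw [one_lt_div (by positivity)]; linarith)
    (fun s => mul_nonneg (by norm_num) (hS0 s)) hVd
    (fun s hs => (hqb s).trans
      (neg_nonpos.2 (mul_nonneg (hsc0 s) (mul_nonneg hμ.le (hS0 s)))))
    (by
      intro s hs hpos
      refine (hqb s).trans (le_of_eq ?_)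
      have hN2 : ∑ i, gradx g (x s) (y s) i ^ 2 + ∑ j, grady g (x s) (y s) j ^ 2 =
          normG g (x s) (y s) ^ (2 : ℝ) := by
        rw [Real.rpow_two, normG, Real.sq_sqrt (hS0 s)]
      have hVN : lyapV g (x s) (y s) = (1 / 2) * normG g (x s) (y s) ^ (2 : ℝ) := by
        rw [← hN2, lyapV]
      have hN : 0 < normG g (x s) (y s) := by
        refine lt_of_le_of_ne (hN0 s) fun h => ?_
        simp only [hVN, ← h] at hpos
        norm_num at hpos
      have conv : ∀ r : ℝ, 0 < r - 1 → normG g (x s) (y s) ^ (-((r - 2) / (r - 1))) *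
          normG g (x s) (y s) ^ (2 : ℝ) =
          2 ^ (r / (2 * (r - 1))) * lyapV g (x s) (y s) ^ (r / (2 * (r - 1))) := by
        intro r hr
        have hV0 : 0 ≤ lyapV g (x s) (y s) := hpos.le
        rw [← Real.mul_rpow (by norm_num) hV0, hVN, ← Real.rpow_add hN, ← mul_assoc]
        norm_num only
        rw [one_mul, ← Real.rpow_mul hN.le]
        congr 1
        field_simp
        ring
      have c1 := conv p hp1
      have c2 := conv q hq1'
      rw [hN2]
      simp only [hsc]
      linear_combination (-min μ₁ μ₂) * c1 + (-min μ₁ μ₂) * c2)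
    t ht
  have hz : ∑ i, gradx g (x t) (y t) i ^ 2 + ∑ j, grady g (x t) (y t) j ^ 2 = 0 := by
    simp only [lyapV] at hV
    linarith
  have n1 : 0 ≤ ∑ i, gradx g (x t) (y t) i ^ 2 := Finset.sum_nonneg fun i _ => sq_nonneg _
  have n2 : 0 ≤ ∑ i, grady g (x t) (y t) i ^ 2 := Finset.sum_nonneg fun i _ => sq_nonneg _
  have z1 := (Finset.sum_eq_zero_iff_of_nonneg fun i _ => sq_nonneg _).1
    (show ∑ i, gradx g (x t) (y t) i ^ 2 = 0 by linarith)
  have z2 := (Finset.sum_eq_zero_iff_of_nonneg fun i _ => sq_nonneg _).1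
    (show ∑ i, grady g (x t) (y t) i ^ 2 = 0 by linarith)
  exact huniq _ _ (funext fun i => by simpa using z1 i (Finset.mem_univ i))
    (funext fun i => by simpa using z2 i (Finset.mem_univ i))
end

section
/- Let g : ℝⁿ × ℝᵐ → ℝ be twice continuously differentiable with ∇²ₓₓ g(x,y) ⪰ μ₁ I_n and ∇²ᵧᵧ g(x,y) ⪯ −μ₂ I_m for all (x,y), where μ₁, μ₂ > 0. Fix p > 2, q ∈ (1,2) and define ∇G(x,y) = (∇ₓg(x,y), −∇ᵧg(x,y)). Let (x, y) : [0,∞) → ℝⁿ × ℝᵐ be a differentiable trajectory such that at every t with ∇G(x(t),y(t)) ≠ 0, ẋ(t) = −∇ₓg · ( ‖∇G‖^{−(p−2)/(p−1)} + ‖∇G‖^{−(q−2)/(q−1)} ) and ẏ(t) = ∇ᵧg · ( ‖∇G‖^{−(p−2)/(p−1)} + ‖∇G‖^{−(q−2)/(q−1)} ) (all evaluated at (x(t),y(t))). Define V(t) = (1/2)‖∇ₓg(x(t),y(t))‖² + (1/2)‖∇ᵧg(x(t),y(t))‖². Then at every t with ∇G(x(t),y(t)) ≠ 0, d/dt V(t)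 ≤ −min(μ₁, μ₂) · ( (2V(t))^{p/(2(p−1))} + (2V(t))^{q/(2(q−1))} ). -/
section helpers

variable {n m : ℕ}

lemma aux_gradx (g : (Fin n → ℝ) → (Fin m → ℝ) → ℝ)
    (hg : ContDiff ℝ 2 (fun z : (Fin n → ℝ) × (Fin m → ℝ) => g z.1 z.2))
    (x : Fin n → ℝ) (y : Fin m → ℝ) (i : Fin n) :
    gradx g x y i =
      fderiv ℝ (fun z : (Fin n → ℝ) × (Fin m → ℝ) => g z.1 z.2) (x, y) (Pi.single i 1, 0) := by
  have h1 := ((hg.differentiable (by norm_num)) (x, y)).hasFDerivAt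
  have h2 : HasFDerivAt (fun x' : Fin n → ℝ => (x', y))
      (ContinuousLinearMap.inl ℝ (Fin n → ℝ) (Fin m → ℝ)) x := hasFDerivAt_prodMk_left x y
  have h3 := HasFDerivAt.comp x h1 h2
  have h4 : fderiv ℝ (fun x' => g x' y) x = _ := h3.fderiv
  unfold gradx
  rw [h4]
  simp

lemma aux_grady (g : (Fin n → ℝ) → (Fin m → ℝ) → ℝ)
    (hg : ContDiff ℝ 2 (fun z : (Fin n → ℝ) × (Fin m → ℝ) => g z.1 z.2))
    (x : Fin n → ℝ) (y : Fin m → ℝ) (i : Fin m) :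
    grady g x y i =
      fderiv ℝ (fun z : (Fin n → ℝ) × (Fin m → ℝ) => g z.1 z.2) (x, y) (0, Pi.single i 1) := by
  have h1 := ((hg.differentiable (by norm_num)) (x, y)).hasFDerivAt
  have h2 : HasFDerivAt (fun y' : Fin m → ℝ => (x, y'))
      (ContinuousLinearMap.inr ℝ (Fin n → ℝ) (Fin m → ℝ)) y := hasFDerivAt_prodMk_right x y
  have h3 := HasFDerivAt.comp y h1 h2
  have h4 : fderiv ℝ (fun y' => g x y') y = _ := h3.fderiv
  unfold grady
  rw [h4]
  simp

lemma aux_sndDeriv (G : (Fin n → ℝ) × (Fin m → ℝ) → ℝ) (hg : ContDiff ℝ 2 G)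
    (z w : (Fin n → ℝ) × (Fin m → ℝ)) :
    HasFDerivAt (fun z => fderiv ℝ G z w)
      ((ContinuousLinearMap.apply ℝ ℝ w).comp (fderiv ℝ (fderiv ℝ G) z)) z := by
  have h1 : ContDiff ℝ 1 (fderiv ℝ G) := hg.fderiv_right (by norm_num)
  have h2 := ((h1.differentiable (by norm_num)) z).hasFDerivAt
  exact (ContinuousLinearMap.apply ℝ ℝ w).hasFDerivAt.comp z h2

lemma aux_hessxx (g : (Fin n → ℝ) → (Fin m → ℝ) → ℝ)
    (hg : ContDiff ℝ 2 (fun z : (Fin n → ℝ) × (Fin m → ℝ) => g z.1 z.2))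
    (x : Fin n → ℝ) (y : Fin m → ℝ) (i j : Fin n) :
    hessxx g x y i j =
      fderiv ℝ (fderiv ℝ (fun z : (Fin n → ℝ) × (Fin m → ℝ) => g z.1 z.2)) (x, y)
        (Pi.single i 1, 0) (Pi.single j 1, 0) := by
  have h1 := aux_sndDeriv _ hg (x, y) (Pi.single j 1, 0)
  have h2 : HasFDerivAt (fun x' : Fin n → ℝ => (x', y))
      (ContinuousLinearMap.inl ℝ (Fin n → ℝ) (Fin m → ℝ)) x := hasFDerivAt_prodMk_left x y
  have h3 := HasFDerivAt.comp x h1 h2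
  have h4 : (fun x' => gradx g x' y j) = _ := funext fun x' => aux_gradx g hg x' y j
  unfold hessxx
  rw [Matrix.of_apply, h4]
  have h5 := h3.fderiv
  simp only [Function.comp_def] at h5
  rw [h5]
  simp

lemma aux_hessyy (g : (Fin n → ℝ) → (Fin m → ℝ) → ℝ)
    (hg : ContDiff ℝ 2 (fun z : (Fin n → ℝ) × (Fin m → ℝ) => g z.1 z.2))
    (x : Fin n → ℝ) (y : Fin m → ℝ) (i j : Fin m) :
    hessyy g x y i j =
      fderiv ℝ (fderiv ℝ (fun z : (Fin n → ℝ) × (Fin m → ℝ) => g z.1 z.2)) (x, y)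
        (0, Pi.single i 1) (0, Pi.single j 1) := by
  have h1 := aux_sndDeriv _ hg (x, y) (0, Pi.single j 1)
  have h2 : HasFDerivAt (fun y' : Fin m → ℝ => (x, y'))
      (ContinuousLinearMap.inr ℝ (Fin n → ℝ) (Fin m → ℝ)) y := hasFDerivAt_prodMk_right x y
  have h3 := HasFDerivAt.comp y h1 h2
  have h4 : (fun y' => grady g x y' j) = _ := funext fun y' => aux_grady g hg x y' j
  unfold hessyy
  rw [Matrix.of_apply, h4]
  have h5 := h3.fderiv
  simp only [Function.comp_def] at h5
  rw [h5]
  simp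

lemma aux_lin {k : ℕ} (L : (Fin k → ℝ) →ₗ[ℝ] ℝ) (u : Fin k → ℝ) :
    ∑ i, u i * L (Pi.single i 1) = L u := by
  rw [LinearMap.pi_apply_eq_sum_univ L u]
  refine Finset.sum_congr rfl fun i _ => ?_
  rw [smul_eq_mul]
  congr 2
  ext j
  simp [Pi.single_apply, eq_comm]

lemma aux_linx (L : (Fin n → ℝ) × (Fin m → ℝ) →L[ℝ] ℝ) (u : Fin n → ℝ) :
    ∑ i, u i * L (Pi.single i 1, 0) = L (u, 0) :=
  aux_lin (L.toLinearMap.comp (LinearMap.inl ℝ _ _)) u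

lemma aux_liny (L : (Fin n → ℝ) × (Fin m → ℝ) →L[ℝ] ℝ) (u : Fin m → ℝ) :
    ∑ i, u i * L (0, Pi.single i 1) = L (0, u) :=
  aux_lin (L.toLinearMap.comp (LinearMap.inr ℝ _ _)) u

lemma aux_quadx (D : (Fin n → ℝ) × (Fin m → ℝ) →L[ℝ] (Fin n → ℝ) × (Fin m → ℝ) →L[ℝ] ℝ)
    (u : Fin n → ℝ) :
    ∑ i, ∑ j, u i * D (Pi.single i 1, 0) (Pi.single j 1, 0) * u j = D (u, 0) (u, 0) := by
  have h := aux_linx (D.flip (u, 0)) u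
  simp only [ContinuousLinearMap.flip_apply] at h
  rw [← h]
  refine Finset.sum_congr rfl fun i _ => ?_
  rw [← aux_linx (D (Pi.single i 1, 0)) u, Finset.mul_sum]
  exact Finset.sum_congr rfl fun j _ => by ring

lemma aux_quady (D : (Fin n → ℝ) × (Fin m → ℝ) →L[ℝ] (Fin n → ℝ) × (Fin m → ℝ) →L[ℝ] ℝ)
    (u : Fin m → ℝ) :
    ∑ i, ∑ j, u i * D (0, Pi.single i 1) (0, Pi.single j 1) * u j = D (0, u) (0, u) := by
  have h := aux_liny (D.flip (0, u)) u
  simp only [ContinuousLinearMap.flip_apply] at h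
  rw [← h]
  refine Finset.sum_congr rfl fun i _ => ?_
  rw [← aux_liny (D (0, Pi.single i 1)) u, Finset.mul_sum]
  exact Finset.sum_congr rfl fun j _ => by ring

lemma aux_rpow (S r : ℝ) (hS : 0 < S) (hr : 1 < r) :
    Real.sqrt S ^ (-((r - 2) / (r - 1))) * S = S ^ (r / (2 * (r - 1))) := by
  have h : r - 1 ≠ 0 := by linarith
  rw [Real.sqrt_eq_rpow, ← Real.rpow_mul hS.le]
  nth_rewrite 2 [← Real.rpow_one S]
  rw [← Real.rpow_add hS]
  congr 1
  field_simp
  ring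

end helpers

/-- **Key differential inequality in the proof of Theorem 4 (equation (25)).** Along
the normalized saddle-point dynamics for a `C²`, strongly convex-strongly concave `g`,
the Lyapunov function `V = (1/2)‖∇ₓg‖² + (1/2)‖∇ᵧg‖²` satisfies, at every time where
`∇G ≠ 0`, `V̇ ≤ -min(μ₁,μ₂)((2V)^{p/(2(p-1))} + (2V)^{q/(2(q-1))})`. -/
theorem saddle_point_dynamics_lyapunov_inequality
    {n m : ℕ} (g : (Fin n → ℝ) → (Fin m → ℝ) → ℝ)
    (hg : ContDiff ℝ 2 (fun z : (Fin n → ℝ) × (Fin m → ℝ) => g z.1 z.2))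
    (μ₁ μ₂ : ℝ) (hμ₁ : 0 < μ₁) (hμ₂ : 0 < μ₂)
    (hxx : ∀ x y (u : Fin n → ℝ),
      μ₁ * ∑ i, u i ^ 2 ≤ ∑ i, ∑ j, u i * hessxx g x y i j * u j)
    (hyy : ∀ x y (w : Fin m → ℝ),
      ∑ i, ∑ j, w i * hessyy g x y i j * w j ≤ -μ₂ * ∑ j, w j ^ 2)
    (p q : ℝ) (hp : 2 < p) (hq : q ∈ Set.Ioo (1 : ℝ) 2)
    (x : ℝ → (Fin n → ℝ)) (y : ℝ → (Fin m → ℝ))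
    (hdyn : ∀ t : ℝ, 0 ≤ t →
      ¬(gradx g (x t) (y t) = 0 ∧ grady g (x t) (y t) = 0) →
      (∀ i, HasDerivAt (fun s => x s i)
        (-gradx g (x t) (y t) i *
          (normG g (x t) (y t) ^ (-((p - 2) / (p - 1))) +
            normG g (x t) (y t) ^ (-((q - 2) / (q - 1))))) t) ∧
      (∀ j, HasDerivAt (fun s => y s j)
        (grady g (x t) (y t) j *
          (normG g (x t) (y t) ^ (-((p - 2) / (p - 1))) +
            normG g (x t) (y t) ^ (-((q - 2) / (q - 1))))) t)) :
    ∀ t : ℝ, 0 ≤ t →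
      ¬(gradx g (x t) (y t) = 0 ∧ grady g (x t) (y t) = 0) →
      deriv (fun s =>
          (1 / 2) * ∑ i, gradx g (x s) (y s) i ^ 2 +
            (1 / 2) * ∑ j, grady g (x s) (y s) j ^ 2) t ≤
        -min μ₁ μ₂ *
          ((2 * ((1 / 2) * ∑ i, gradx g (x t) (y t) i ^ 2 +
              (1 / 2) * ∑ j, grady g (x t) (y t) j ^ 2)) ^ (p / (2 * (p - 1))) +
            (2 * ((1 / 2) * ∑ i, gradx g (x t) (y t) i ^ 2 +
              (1 / 2) * ∑ j, grady g (x t) (y t) j ^ 2)) ^ (q / (2 * (q - 1)))) := by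
  intro t ht hne
  obtain ⟨hx, hy⟩ := hdyn t ht hne
  set c : ℝ := normG g (x t) (y t) ^ (-((p - 2) / (p - 1))) +
            normG g (x t) (y t) ^ (-((q - 2) / (q - 1))) with hc
  set a := gradx g (x t) (y t) with ha
  set b := grady g (x t) (y t) with hb
  set G := (fun z : (Fin n → ℝ) × (Fin m → ℝ) => g z.1 z.2) with hG
  set D := fderiv ℝ (fderiv ℝ G) (x t, y t) with hD
  have hX : HasDerivAt x (fun i => -a i * c) t := hasDerivAt_pi.2 hx
  have hY : HasDerivAt y (fun i => b i * c) t := hasDerivAt_pi.2 hy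
  have hZ := hX.prodMk hY
  set v : (Fin n → ℝ) × (Fin m → ℝ) := ((fun i => -a i * c), (fun i => b i * c)) with hv
  have hA : ∀ i, HasDerivAt (fun s => gradx g (x s) (y s) i) (D v (Pi.single i 1, 0)) t := by
    intro i
    have h := (aux_sndDeriv G hg (x t, y t) (Pi.single i 1, 0)).comp_hasDerivAt t hZ
    have e : (fun s => gradx g (x s) (y s) i) = _ :=
      funext fun s => aux_gradx g hg (x s) (y s) i
    rw [e]
    exact h
  have hB : ∀ i, HasDerivAt (fun s => grady g (x s) (y s) i) (D v (0, Pi.single i 1)) t := by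
    intro i
    have h := (aux_sndDeriv G hg (x t, y t) (0, Pi.single i 1)).comp_hasDerivAt t hZ
    have e : (fun s => grady g (x s) (y s) i) = _ :=
      funext fun s => aux_grady g hg (x s) (y s) i
    rw [e]
    exact h
  have hV := ((HasDerivAt.fun_sum (u := Finset.univ) fun i _ => (hA i).pow 2).const_mul (1 / 2 : ℝ)).add
    ((HasDerivAt.fun_sum (u := Finset.univ) fun i _ => (hB i).pow 2).const_mul (1 / 2 : ℝ))
  have hVd : deriv (fun s =>
          (1 / 2) * ∑ i, gradx g (x s) (y s) i ^ 2 +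
            (1 / 2) * ∑ j, grady g (x s) (y s) j ^ 2) t = D v (a, 0) + D v (0, b) := by
    refine Eq.trans hV.deriv ?_
    rw [← aux_linx (D v) a, ← aux_liny (D v) b, Finset.mul_sum, Finset.mul_sum]
    congr 1
    · refine Finset.sum_congr rfl fun i _ => ?_
      rw [← ha]; norm_num; ring
    · refine Finset.sum_congr rfl fun i _ => ?_
      rw [← hb]; norm_num; ring
  have hsymm : D (a, 0) (0, b) = D (0, b) (a, 0) := by
    have h : IsSymmSndFDerivAt ℝ G (x t, y t) :=
      (hg.contDiffAt).isSymmSndFDerivAt (by simp)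
    exact h (a, 0) (0, b)
  have hv2 : v = c • ((0, b) - (a, 0)) := by
    rw [hv]
    ext i <;> simp [mul_comm]
  have hVd2 : D v (a, 0) + D v (0, b) = c * (D (0, b) (0, b) - D (a, 0) (a, 0)) := by
    rw [hv2]
    simp only [map_smul, map_sub, ContinuousLinearMap.smul_apply, ContinuousLinearMap.sub_apply,
      smul_eq_mul, hsymm]
    ring
  have h1 := hxx (x t) (y t) a
  have h2 := hyy (x t) (y t) b
  simp only [aux_hessxx g hg] at h1
  simp only [aux_hessyy g hg] at h2
  rw [aux_quadx] at h1
  rw [aux_quady] at h2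
  rw [hVd, hVd2]
  set A := ∑ i, a i ^ 2 with hAdef
  set B := ∑ i, b i ^ 2 with hBdef
  have hA0 : 0 ≤ A := Finset.sum_nonneg fun i _ => sq_nonneg _
  have hB0 : 0 ≤ B := Finset.sum_nonneg fun i _ => sq_nonneg _
  have hS : 0 < A + B := by
    rcases (add_nonneg hA0 hB0).lt_or_eq with h | h
    · exact h
    · exfalso
      have hAz : A = 0 := by linarith
      have hBz : B = 0 := by linarith
      rw [hAdef, Finset.sum_eq_zero_iff_of_nonneg fun i _ => sq_nonneg _] at hAz
      rw [hBdef, Finset.sum_eq_zero_iff_of_nonneg fun i _ => sq_nonneg _] at hBz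
      exact hne ⟨funext fun i => by simpa using hAz i (Finset.mem_univ i),
        funext fun i => by simpa using hBz i (Finset.mem_univ i)⟩
  have hN : normG g (x t) (y t) = Real.sqrt (A + B) := rfl
  have h2V : 2 * (1 / 2 * A + 1 / 2 * B) = A + B := by ring
  have hc0 : 0 ≤ c := by
    rw [hc, hN]; positivity
  rw [h2V, ← aux_rpow (A + B) p hS (by linarith), ← aux_rpow (A + B) q hS hq.1, ← add_mul,
    ← hN, ← hc]
  have h3 : D (0, b) (0, b) - D (a, 0) (a, 0) ≤ -min μ₁ μ₂ * (A + B) := by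
    have := mul_le_mul_of_nonneg_right (min_le_left μ₁ μ₂) hA0
    have := mul_le_mul_of_nonneg_right (min_le_right μ₁ μ₂) hB0
    linarith
  have := mul_le_mul_of_nonneg_left h3 hc0
  linarith
end
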